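/- Let p ≥ 4 be an integer and let H be a finite simple graph with maximum degree Δ(H) ≥ 6 and clique number ω(H) ≤ Δ(H) − 1. Then χ_{K_p}(H) ≤ ⌈(Δ(H) − 1)/(p − 1)⌉, i.e., V(H) can be partitioned into at most ⌈(Δ(H) − 1)/(p − 1)⌉ sets each of which induces a K_p-free subgraph. -/

import Mathlib

/-!
Maximum degree at most `e + 1` together with clique number at most `e` is preserved, with `e`
lowered by one, when a suitable maximal independent set is deleted: deleting a maximal independent
set lowers every remaining degree, and it lowers the clique number if it meets every `e`-clique.
Such a set exists when `e ≥ 5`. Indeed, call a vertex *full* if two `e`-cliques sharing `e - 2`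
vertices cover its closed neighbourhood. The full vertices fall into classes whose members have the
same closed neighbourhood, and one representative per class is enough for the `e`-cliques that
contain a full vertex. The remaining, thin, `e`-cliques are grouped into families with large cores,
and Haxell's theorem on independent transversals hits all of them at once.

Deleting `q = p - 1` independent sets in this way splits off one `K_p`-free colour class and lowers
`e` by `q`. This works as long as at least `4` remains of `e`, and the only case left is `p = 4`,
`e = 6` with two colours. There one splits off two independent sets `L`, leaving a graph `F` with
`e = 4`, and adds to `L` an independent set meeting all thin `4`-cliques of `F` and suitable
representatives of the other classes. A monochromatic `K_4` in this colour class consists of two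
adjacent representatives and of two vertices of `L` that both of them see. The representatives can
be chosen to avoid this, unless for some pair of classes all choices fail; then the two classes and
the two vertices of `L` form a `K_6` so restricted that a colouring obtained by induction from a
smaller graph extends over it.
-/

namespace CliqueFreeColoring

open Finset
open scoped Classical

/-! ### Cliques, closed neighbourhoods and vertex deletion -/

section Basics

variable {V : Type*} {G H : SimpleGraph V}

theorem card_inter_le_one {Q I : Finset V} (hQ : G.IsClique Q) (hI : G.IsIndepSet I) :
    (Q ∩ I).card ≤ 1 := by
  refine card_le_one.2 fun a ha b hb => by_contra fun hab => ?_
  rw [mem_inter] at ha hb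
  exact hI ha.2 hb.2 hab (hQ ha.1 hb.1 hab)

/-- The graph obtained from `G` by deleting the vertices of `S`, kept on the same vertex type: the
vertices of `S` become isolated. -/
def deleteVerts (G : SimpleGraph V) (S : Finset V) : SimpleGraph V where
  Adj a b := G.Adj a b ∧ a ∉ S ∧ b ∉ S
  symm := ⟨fun _ _ h => ⟨h.1.symm, h.2.2, h.2.1⟩⟩
  loopless := ⟨fun _ h => h.1.ne rfl⟩

theorem deleteVerts_adj {S : Finset V} {a b : V} :
    (deleteVerts G S).Adj a b ↔ G.Adj a b ∧ a ∉ S ∧ b ∉ S :=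
  Iff.rfl

theorem deleteVerts_le (G : SimpleGraph V) (S : Finset V) : deleteVerts G S ≤ G :=
  fun _ _ h => h.1

theorem isClique_deleteVerts {S Q : Finset V} (hQ : G.IsClique Q) (hQS : Disjoint Q S) :
    (deleteVerts G S).IsClique Q := fun _ ha _ hb hab =>
  ⟨hQ ha hb hab, disjoint_left.1 hQS ha, disjoint_left.1 hQS hb⟩

theorem disjoint_of_isClique_deleteVerts {S Q : Finset V} (hQ : (deleteVerts G S).IsClique Q)
    (hcard : 2 ≤ Q.card) : Disjoint Q S := by
  refine disjoint_left.2 fun a ha => ?_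
  obtain ⟨b, hb, hba⟩ := exists_mem_ne hcard a
  exact (hQ ha hb hba.symm).2.1

theorem exists_dominating_isIndepSet {S A : Finset V} (hS : G.IsIndepSet S) (hSA : S ⊆ A) :
    ∃ I : Finset V, G.IsIndepSet I ∧ S ⊆ I ∧ I ⊆ A ∧ ∀ v ∈ A, v ∉ I → ∃ s ∈ I, G.Adj v s := by
  have hfin : {I : Finset V | G.IsIndepSet I ∧ I ⊆ A}.Finite :=
    A.powerset.finite_toSet.subset fun I hI => mem_powerset.2 hI.2
  obtain ⟨I, hSI, ⟨hI, hIA⟩, hmax⟩ := hfin.exists_le_maximal ⟨hS, hSA⟩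
  refine ⟨I, hI, hSI, hIA, fun v hvA hvI => by_contra fun hcon => hvI ?_⟩
  push Not at hcon
  have hins : G.IsIndepSet (insert v I : Finset V) := by
    rw [coe_insert]
    exact Set.Pairwise.insert hI fun b hb _ => ⟨hcon b hb, fun h => hcon b hb h.symm⟩
  exact hmax ⟨hins, insert_subset hvA hIA⟩ (subset_insert _ _) (mem_insert_self _ _)

variable [Fintype V]

/-- The vertex `x` together with its neighbours. -/
noncomputable def closedNbhd (G : SimpleGraph V) (x : V) : Finset V :=
  insert x (G.neighborFinset x)

theorem mem_closedNbhd {x y : V} : y ∈ closedNbhd G x ↔ y = x ∨ G.Adj x y := by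
  rw [closedNbhd, mem_insert, SimpleGraph.mem_neighborFinset]

theorem self_mem_closedNbhd (G : SimpleGraph V) (x : V) : x ∈ closedNbhd G x :=
  mem_insert_self _ _

theorem card_closedNbhd (G : SimpleGraph V) (x : V) :
    (closedNbhd G x).card = G.degree x + 1 := by
  rw [closedNbhd, card_insert_of_notMem (G.notMem_neighborFinset_self x),
    G.card_neighborFinset_eq_degree]

theorem subset_closedNbhd_of_isClique {Q : Finset V} (hQ : G.IsClique Q) {x : V} (hx : x ∈ Q) :
    Q ⊆ closedNbhd G x := fun _ hy =>
  mem_closedNbhd.2 ((eq_or_ne _ x).imp_right fun hne => hQ hx hy hne.symm)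

theorem isClique_insert_of_subset_closedNbhd {Q : Finset V} (hQ : G.IsClique Q) {x : V}
    (hx : Q ⊆ closedNbhd G x) : G.IsClique (insert x Q : Finset V) := by
  rw [coe_insert]
  exact hQ.insert fun b hb hne => (mem_closedNbhd.1 (hx hb)).resolve_left hne.symm

theorem adj_of_closedNbhd_eq {x y z : V} (hxy : closedNbhd G x = closedNbhd G y)
    (hxz : G.Adj x z) (hzy : z ≠ y) : G.Adj y z :=
  (mem_closedNbhd.1 (hxy ▸ mem_closedNbhd.2 (.inr hxz))).resolve_left hzy

/-- `Δ(G) ≤ e + 1` and `ω(G) ≤ e`. With `e = Δ(H) - 1` this is the hypothesis of the theorem; it is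
kept, with smaller and smaller `e`, as colour classes are split off. -/
structure DegreeCliqueBound (G : SimpleGraph V) (e : ℕ) : Prop where
  degree_le : ∀ v, G.degree v ≤ e + 1
  cliqueFree : G.CliqueFree (e + 1)

theorem DegreeCliqueBound.card_le {e : ℕ} (hG : DegreeCliqueBound G e) {Q : Finset V}
    (hQ : G.IsClique Q) : Q.card ≤ e :=
  not_lt.1 fun hlt => hG.cliqueFree.mono hlt Q ⟨hQ, rfl⟩

theorem DegreeCliqueBound.of_le {e : ℕ} (hG : DegreeCliqueBound G e) (hle : H ≤ G) :
    DegreeCliqueBound H e :=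
  ⟨fun v => (SimpleGraph.degree_le_of_le hle).trans (hG.degree_le v), hG.cliqueFree.anti hle⟩

theorem DegreeCliqueBound.card_closedNbhd_le {e : ℕ} (hG : DegreeCliqueBound G e) (x : V) :
    (closedNbhd G x).card ≤ e + 2 := by
  have := hG.degree_le x
  rw [card_closedNbhd]
  omega

end Basics

/-! ### Independent transversals -/

section Transversals

variable {V ι : Type*} {G H : SimpleGraph V} {J : Finset ι} {P : ι → Finset V} {R : Finset V}
  {f : ι → V}

/-- `f` chooses a vertex from each part `P j`, `j ∈ J`, such that no two chosen vertices are
adjacent. -/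
structure IsIndepTransversal (G : SimpleGraph V) (J : Finset ι) (P : ι → Finset V)
    (f : ι → V) : Prop where
  mem : ∀ j ∈ J, f j ∈ P j
  not_adj : ∀ i ∈ J, ∀ j ∈ J, ¬ G.Adj (f i) (f j)

theorem IsIndepTransversal.anti (hf : IsIndepTransversal G J P f) (hle : H ≤ G) :
    IsIndepTransversal H J P f :=
  ⟨hf.mem, fun i hi j hj h => hf.not_adj i hi j hj (hle h)⟩

theorem IsIndepTransversal.update {j : ι} {w : V} (hf : IsIndepTransversal G (J.erase j) P f)
    (hw : w ∈ P j) (hwf : ∀ i ∈ J.erase j, ¬ G.Adj w (f i)) :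
    IsIndepTransversal G J P (Function.update f j w) where
  mem i hi := by
    obtain rfl | hij := eq_or_ne i j
    · rwa [Function.update_self]
    · rw [Function.update_of_ne hij]
      exact hf.mem i (mem_erase.2 ⟨hij, hi⟩)
  not_adj i hi k hk := by
    obtain rfl | hij := eq_or_ne i j <;> obtain rfl | hkj := eq_or_ne k i
    · exact G.irrefl
    · rw [Function.update_self, Function.update_of_ne hkj]
      exact hwf k (mem_erase.2 ⟨hkj, hk⟩)
    · exact G.irrefl
    · rw [Function.update_of_ne hij]
      obtain rfl | hkj := eq_or_ne k j
      · rw [Function.update_self]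
        exact fun h => hwf i (mem_erase.2 ⟨hij, hi⟩) h.symm
      · rw [Function.update_of_ne hkj]
        exact hf.not_adj i (mem_erase.2 ⟨hij, hi⟩) k (mem_erase.2 ⟨hkj, hk⟩)

/-- Some independent transversal of the parts `P j`, `j ∈ J`, extends by a vertex of the root part
`R`. -/
def HasRootedTransversal (G : SimpleGraph V) (J : Finset ι) (P : ι → Finset V)
    (R : Finset V) : Prop :=
  ∃ f, IsIndepTransversal G J P f ∧ ∃ r ∈ R, ∀ j ∈ J, ¬ G.Adj r (f j)

/-- A set of `|S|` pairs of vertices dominates the root part `R` together with the parts indexed by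
`S`: Haxell's obstruction to a rooted transversal. -/
def DominatedByPairs (G : SimpleGraph V) (J : Finset ι) (P : ι → Finset V)
    (R : Finset V) : Prop :=
  ∃ S ⊆ J, ∃ x y : ι → V, (∀ s ∈ S, x s ∈ R ∪ S.biUnion P) ∧ (∀ s ∈ S, y s ∈ P s) ∧
    ∀ v ∈ R ∪ S.biUnion P, ∃ s ∈ S, G.Adj (x s) v ∨ G.Adj (y s) v

theorem DominatedByPairs.mono (h : DominatedByPairs H J P R) (hle : H ≤ G) :
    DominatedByPairs G J P R := by
  obtain ⟨S, hSJ, x, y, hx, hy, hdom⟩ := h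
  refine ⟨S, hSJ, x, y, hx, hy, fun v hv => ?_⟩
  obtain ⟨s, hs, hadj⟩ := hdom v hv
  exact ⟨s, hs, hadj.imp (@hle _ _) (@hle _ _)⟩

/-- The vertices of `A` adjacent to neither `x` nor `y`. -/
noncomputable def commonNonNbrs (G : SimpleGraph V) (x y : V) (A : Finset V) : Finset V :=
  {v ∈ A | ¬ G.Adj x v ∧ ¬ G.Adj y v}

theorem mem_commonNonNbrs {x y v : V} {A : Finset V} :
    v ∈ commonNonNbrs G x y A ↔ v ∈ A ∧ ¬ G.Adj x v ∧ ¬ G.Adj y v :=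
  mem_filter

theorem DominatedByPairs.of_commonNonNbrs {x y : V} {j : ι} (hj : j ∈ J) (hx : x ∈ R)
    (hy : y ∈ P j)
    (h : DominatedByPairs G (J.erase j) (fun i => commonNonNbrs G x y (P i))
      (commonNonNbrs G x y (R ∪ P j))) :
    DominatedByPairs G J P R := by
  obtain ⟨S, hSJ, x', y', hx', hy', hdom⟩ := h
  have hne : ∀ s ∈ S, s ≠ j := fun s hs => (mem_erase.1 (hSJ hs)).1
  have hmem : ∀ v, v ∈ commonNonNbrs G x y (R ∪ P j) ∪
      S.biUnion (fun i => commonNonNbrs G x y (P i)) ↔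
      v ∈ R ∪ (insert j S).biUnion P ∧ ¬ G.Adj x v ∧ ¬ G.Adj y v := by
    intro v
    simp only [mem_union, mem_biUnion, mem_commonNonNbrs, biUnion_insert]
    grind
  refine ⟨insert j S, insert_subset hj (hSJ.trans (erase_subset _ _)), Function.update x' j x,
    Function.update y' j y, ?_, ?_, fun v hv => ?_⟩
  · refine forall_mem_insert _ _ _ |>.2 ⟨?_, fun s hs => ?_⟩
    · rw [Function.update_self]
      exact mem_union_left _ hx
    · rw [Function.update_of_ne (hne s hs)]
      exact ((hmem _).1 (hx' s hs)).1
  · refine forall_mem_insert _ _ _ |>.2 ⟨?_, fun s hs => ?_⟩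
    · rwa [Function.update_self]
    · rw [Function.update_of_ne (hne s hs)]
      exact (mem_commonNonNbrs.1 (hy' s hs)).1
  · by_cases hadj : G.Adj x v ∨ G.Adj y v
    · exact ⟨j, mem_insert_self _ _, by simpa only [Function.update_self] using hadj⟩
    · obtain ⟨s, hs, h⟩ := hdom v ((hmem v).2 ⟨hv, not_or.1 hadj⟩)
      exact ⟨s, mem_insert_of_mem hs, by simpa only [Function.update_of_ne (hne s hs)] using h⟩

/- A transversal of the contracted system extends back to `J`: by `y` if its root lies in `R`, and
by its root itself, with `x` as the new root, if that lies in `P j`. -/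
theorem HasRootedTransversal.of_commonNonNbrs {x y : V} {j : ι} (hx : x ∈ R) (hy : y ∈ P j)
    (h : HasRootedTransversal G (J.erase j) (fun i => commonNonNbrs G x y (P i))
      (commonNonNbrs G x y (R ∪ P j))) :
    HasRootedTransversal G J P R := by
  obtain ⟨g, hg, r, hr, hrg⟩ := h
  obtain ⟨hrRP, hxr, hyr⟩ := mem_commonNonNbrs.1 hr
  have hgP : ∀ i ∈ J.erase j, g i ∈ P i ∧ ¬ G.Adj x (g i) ∧ ¬ G.Adj y (g i) :=
    fun i hi => mem_commonNonNbrs.1 (hg.mem i hi)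
  have hg' : IsIndepTransversal G (J.erase j) P g := ⟨fun i hi => (hgP i hi).1, hg.not_adj⟩
  have hroot : ∀ {w r' : V}, ¬ G.Adj r' w → (∀ i ∈ J.erase j, ¬ G.Adj r' (g i)) →
      ∀ i ∈ J, ¬ G.Adj r' (Function.update g j w i) := by
    intro w r' hw hr' i hi
    obtain rfl | hij := eq_or_ne i j
    · rwa [Function.update_self]
    · rw [Function.update_of_ne hij]
      exact hr' i (mem_erase.2 ⟨hij, hi⟩)
  obtain hrR | hrP := mem_union.1 hrRP
  · exact ⟨_, hg'.update hy fun i hi => (hgP i hi).2.2, r, hrR,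
      hroot (fun h => hyr h.symm) hrg⟩
  · exact ⟨_, hg'.update hrP hrg, x, hx, hroot hxr fun i hi => (hgP i hi).2.1⟩

theorem adj_deleteEdges_pair_of_adj {x y a b : V} (h : G.Adj a b)
    (hne : ¬ ((a = x ∧ b = y) ∨ (a = y ∧ b = x))) : (G.deleteEdges {s(x, y)}).Adj a b := by
  rw [SimpleGraph.deleteEdges_adj, Set.mem_singleton_iff, Sym2.eq_iff]
  exact ⟨h, hne⟩

theorem isIndepTransversal_commonNonNbrs_of_deleteEdges {x y : V} {j : ι} (hx : x ∈ R)
    (hy : y ∈ P j) (hj : j ∈ J) (hRP : ∀ i ∈ J, Disjoint R (P i))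
    (hP : (J : Set ι).PairwiseDisjoint P)
    (h : HasRootedTransversal (G.deleteEdges {s(x, y)}) J P R)
    (hno : ¬ HasRootedTransversal G J P R) :
    ∃ f, IsIndepTransversal G (J.erase j) (fun i => commonNonNbrs G x y (P i)) f := by
  obtain ⟨f, hf, r, hr, hrf⟩ := h
  have hxf : ∀ i ∈ J, f i ≠ x := fun i hi hfx =>
    disjoint_left.1 (hRP i hi) hx (hfx ▸ hf.mem i hi)
  have hyf : ∀ i ∈ J, f i = y → i = j := fun i hi hfy =>
    hP.elim_finset hi hj y (hfy ▸ hf.mem i hi) hy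
  have hf' : IsIndepTransversal G J P f := ⟨hf.mem, fun i hi k hk hadj =>
    hf.not_adj i hi k hk (adj_deleteEdges_pair_of_adj hadj (by
      rintro (⟨hfx, -⟩ | ⟨-, hfx⟩)
      exacts [hxf i hi hfx, hxf k hk hfx]))⟩
  have hkey : ∀ k ∈ J, G.Adj r (f k) → r = x ∧ f k = y := by
    refine fun k hk hadj => by_contra fun hne => hrf k hk (adj_deleteEdges_pair_of_adj hadj ?_)
    rintro (h | ⟨-, hfx⟩)
    exacts [hne h, hxf k hk hfx]
  obtain ⟨k, hk, hrk⟩ : ∃ k ∈ J, G.Adj r (f k) := by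
    by_contra! hcon
    exact hno ⟨f, hf', r, hr, hcon⟩
  obtain ⟨rfl, hfk⟩ := hkey k hk hrk
  obtain rfl := hyf k hk hfk
  refine ⟨f, fun i hi => ?_, fun i hi l hl =>
    hf'.not_adj i (mem_of_mem_erase hi) l (mem_of_mem_erase hl)⟩
  rw [mem_erase] at hi
  refine mem_commonNonNbrs.2 ⟨hf.mem i hi.2, fun hadj => ?_, hfk ▸ hf'.not_adj k hk i hi.2⟩
  exact hi.1 (hyf i hi.2 (hkey i hi.2 hadj).2)

theorem dominatedByPairs_of_not_hasRootedTransversal [Finite V]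
    (hRP : ∀ i ∈ J, Disjoint R (P i)) (hP : (J : Set ι).PairwiseDisjoint P)
    (hf : IsIndepTransversal G J P f) (hno : ¬ HasRootedTransversal G J P R) :
    DominatedByPairs G J P R := by
  induction hn : J.card + G.edgeSet.ncard using Nat.strong_induction_on
    generalizing G J P R f with
  | _ n ih =>
  subst hn
  by_cases hE : ∃ x ∈ R, ∃ j ∈ J, ∃ y ∈ P j, G.Adj x y
  · obtain ⟨x, hx, j, hj, y, hy, hxy⟩ := hE
    by_cases hdel : HasRootedTransversal (G.deleteEdges {s(x, y)}) J P R
    · obtain ⟨g, hg⟩ :=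
        isIndepTransversal_commonNonNbrs_of_deleteEdges hx hy hj hRP hP hdel hno
      have hsub : ∀ A, commonNonNbrs G x y A ⊆ A := fun A => filter_subset _ _
      refine .of_commonNonNbrs hj hx hy (ih _ ?_ (fun i hi => ?_) (fun i hi k hk hik => ?_) hg
        (fun h => hno (.of_commonNonNbrs hx hy h)) rfl)
      · have := card_erase_lt_of_mem hj
        omega
      · rw [mem_erase] at hi
        exact (disjoint_union_left.2 ⟨hRP i hi.2, hP hj hi.2 hi.1.symm⟩).mono (hsub _) (hsub _)
      · exact (hP (mem_of_mem_erase hi) (mem_of_mem_erase hk) hik).mono (hsub _) (hsub _)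
    · have hlt : (G.deleteEdges {s(x, y)}).edgeSet.ncard < G.edgeSet.ncard := by
        refine Set.ncard_lt_ncard (SimpleGraph.edgeSet_ssubset_edgeSet.2 ?_) (Set.toFinite _)
        refine lt_of_le_of_ne (SimpleGraph.deleteEdges_le _) fun h => ?_
        rw [← h, SimpleGraph.deleteEdges_adj] at hxy
        exact hxy.2 rfl
      exact (ih _ (by omega) hRP hP (hf.anti (SimpleGraph.deleteEdges_le _)) hdel rfl).mono
        (SimpleGraph.deleteEdges_le _)
  · push Not at hE
    have hR : R = ∅ := eq_empty_of_forall_notMem fun v hv =>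
      hno ⟨f, hf, v, hv, fun j hj => hE v hv j hj _ (hf.mem j hj)⟩
    exact ⟨∅, empty_subset _, f, f, by simp, by simp, by simp [hR]⟩

variable [Fintype V]

theorem card_le_sum_degree_of_dominated {S : Finset ι} {A : Finset V} {x y : ι → V}
    (hdom : ∀ v ∈ A, ∃ s ∈ S, G.Adj (x s) v ∨ G.Adj (y s) v) :
    A.card ≤ ∑ s ∈ S, (G.degree (x s) + G.degree (y s)) := by
  calc A.card
      ≤ (S.biUnion fun s => G.neighborFinset (x s) ∪ G.neighborFinset (y s)).card := by
        refine card_le_card fun v hv => ?_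
        simpa only [mem_biUnion, mem_union, SimpleGraph.mem_neighborFinset] using hdom v hv
    _ ≤ ∑ s ∈ S, (G.neighborFinset (x s) ∪ G.neighborFinset (y s)).card := card_biUnion_le
    _ ≤ ∑ s ∈ S, (G.degree (x s) + G.degree (y s)) := by
        refine sum_le_sum fun s _ => (card_union_le _ _).trans_eq ?_
        simp only [SimpleGraph.card_neighborFinset_eq_degree]

theorem not_dominatedByPairs {D : ℕ} (hRP : ∀ i ∈ J, Disjoint R (P i))
    (hP : (J : Set ι).PairwiseDisjoint P) (hR : R.Nonempty)
    (hRdeg : ∀ v ∈ R, G.degree v ≤ D)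
    (hdeg : ∀ j ∈ J, ∀ v ∈ P j, G.degree v ≤ D ∧ G.degree v + D ≤ (P j).card) :
    ¬ DominatedByPairs G J P R := by
  rintro ⟨S, hSJ, x, y, hx, hy, hdom⟩
  have hunion : (R ∪ S.biUnion P).card = R.card + ∑ s ∈ S, (P s).card := by
    rw [card_union_of_disjoint, card_biUnion (hP.subset hSJ)]
    exact (disjoint_biUnion_right _ _ _).2 fun i hi => hRP i (hSJ hi)
  have hpair : ∑ s ∈ S, (G.degree (x s) + G.degree (y s)) ≤ ∑ s ∈ S, (P s).card := by
    refine sum_le_sum fun s hs => ?_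
    have hxD : G.degree (x s) ≤ D := by
      obtain hxR | hxS := mem_union.1 (hx s hs)
      · exact hRdeg _ hxR
      · obtain ⟨t, ht, hxt⟩ := mem_biUnion.1 hxS
        exact (hdeg t (hSJ ht) _ hxt).1
    have hyD := (hdeg s (hSJ hs) _ (hy s hs)).2
    omega
  have hcard := card_le_sum_degree_of_dominated hdom
  have hpos := hR.card_pos
  omega

/-- Haxell's theorem, for degrees that may be traded off: only `degree v + D`, rather than `2 * D`,
is compared with the size of the part of `v`. -/
theorem exists_isIndepTransversal [Nonempty V] {D : ℕ} (hP : (J : Set ι).PairwiseDisjoint P)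
    (hne : ∀ j ∈ J, (P j).Nonempty)
    (hdeg : ∀ j ∈ J, ∀ v ∈ P j, G.degree v ≤ D ∧ G.degree v + D ≤ (P j).card) :
    ∃ f, IsIndepTransversal G J P f := by
  induction J using Finset.induction_on with
  | empty => exact ⟨fun _ => Classical.arbitrary V, by simp, by simp⟩
  | insert r J hr ih =>
    rw [coe_insert] at hP
    have hPJ : (J : Set ι).PairwiseDisjoint P := hP.subset (Set.subset_insert _ _)
    have hdegJ := fun j hj => hdeg j (mem_insert_of_mem hj)
    obtain ⟨f, hf⟩ := ih hPJ (fun j hj => hne j (mem_insert_of_mem hj)) hdegJ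
    have hrP : ∀ i ∈ J, Disjoint (P r) (P i) := fun i hi =>
      hP (Set.mem_insert _ _) (Set.mem_insert_of_mem _ hi) (ne_of_mem_of_not_mem hi hr).symm
    have hrooted : HasRootedTransversal G J P (P r) := by_contra fun hno =>
      not_dominatedByPairs hrP hPJ (hne r (mem_insert_self _ _))
        (fun v hv => (hdeg r (mem_insert_self _ _) v hv).1) hdegJ
        (dominatedByPairs_of_not_hasRootedTransversal hrP hPJ hf hno)
    obtain ⟨g, hg, w, hw, hwg⟩ := hrooted
    have herase : (insert r J).erase r = J := erase_insert hr
    exact ⟨_, IsIndepTransversal.update (herase.symm ▸ hg) hw (herase.symm ▸ hwg)⟩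

end Transversals

/-! ### Intersecting maximum cliques -/

section MaxCliques

variable {V : Type*} {G : SimpleGraph V} {e : ℕ} {x y z : V} {Q R T : Finset V}

/-- `x` lies in the two `e`-cliques `Q` and `R`, which meet in only `e - 2` vertices; they then
cover the closed neighbourhood of `x`. -/
structure IsCovering (G : SimpleGraph V) (e : ℕ) (x : V) (Q R : Finset V) : Prop where
  left : G.IsNClique e Q
  right : G.IsNClique e R
  mem : x ∈ Q ∩ R
  card_inter : (Q ∩ R).card + 2 = e

theorem IsCovering.of_mem (h : IsCovering G e x Q R) (hy : y ∈ Q ∩ R) : IsCovering G e y Q R :=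
  ⟨h.left, h.right, hy, h.card_inter⟩

theorem IsCovering.card_union (h : IsCovering G e x Q R) : (Q ∪ R).card = e + 2 := by
  have hsum := card_union_add_card_inter Q R
  rw [h.left.card_eq, h.right.card_eq] at hsum
  have := h.card_inter
  omega

variable [Fintype V]

theorem DegreeCliqueBound.le_card_inter (hG : DegreeCliqueBound G e) (hQ : G.IsNClique e Q)
    (hR : G.IsNClique e R) (hQR : (Q ∩ R).Nonempty) : e ≤ (Q ∩ R).card + 2 := by
  obtain ⟨x, hx⟩ := hQR
  rw [mem_inter] at hx
  have hunion := card_le_card (union_subset (subset_closedNbhd_of_isClique hQ.isClique hx.1)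
    (subset_closedNbhd_of_isClique hR.isClique hx.2))
  have hx := hG.card_closedNbhd_le x
  have hsum := card_union_add_card_inter Q R
  rw [hQ.card_eq, hR.card_eq] at hsum
  omega

theorem DegreeCliqueBound.mem_of_subset_closedNbhd (hG : DegreeCliqueBound G e)
    (hQ : G.IsNClique e Q) (hQx : Q ⊆ closedNbhd G x) : x ∈ Q := by
  by_contra hx
  have hcard := hG.card_le (isClique_insert_of_subset_closedNbhd hQ.isClique hQx)
  rw [card_insert_of_notMem hx, hQ.card_eq] at hcard
  omega

theorem IsCovering.union_eq (hG : DegreeCliqueBound G e) (h : IsCovering G e x Q R) :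
    Q ∪ R = closedNbhd G x := by
  have hx := mem_inter.1 h.mem
  exact eq_of_subset_of_card_le (union_subset (subset_closedNbhd_of_isClique h.left.isClique hx.1)
    (subset_closedNbhd_of_isClique h.right.isClique hx.2))
    ((hG.card_closedNbhd_le x).trans_eq h.card_union.symm)

theorem IsCovering.inter_subset (hG : DegreeCliqueBound G e) (h : IsCovering G e x Q R)
    (hT : G.IsNClique e T) (hx : x ∈ T) : Q ∩ R ⊆ T := by
  refine fun y hy => hG.mem_of_subset_closedNbhd hT ?_
  rw [← (h.of_mem hy).union_eq hG, h.union_eq hG]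
  exact subset_closedNbhd_of_isClique hT.isClique hx

/-- A full vertex: its closed neighbourhood is covered by two `e`-cliques through it. -/
def IsFull (G : SimpleGraph V) (e : ℕ) (x : V) : Prop :=
  ∃ Q R, IsCovering G e x Q R

/-- The vertices that lie in every `e`-clique through `x`. -/
noncomputable def cliqueClass (G : SimpleGraph V) (e : ℕ) (x : V) : Finset V :=
  {y | ∀ Q, G.IsNClique e Q → x ∈ Q → y ∈ Q}

theorem mem_cliqueClass : y ∈ cliqueClass G e x ↔ ∀ Q, G.IsNClique e Q → x ∈ Q → y ∈ Q :=
  mem_filter_univ _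

theorem self_mem_cliqueClass (G : SimpleGraph V) (e : ℕ) (x : V) : x ∈ cliqueClass G e x :=
  mem_cliqueClass.2 fun _ _ hx => hx

theorem cliqueClass_subset (hQ : G.IsNClique e Q) (hx : x ∈ Q) : cliqueClass G e x ⊆ Q :=
  fun _ hy => mem_cliqueClass.1 hy Q hQ hx

theorem IsCovering.cliqueClass_eq (hG : DegreeCliqueBound G e) (h : IsCovering G e x Q R) :
    cliqueClass G e x = Q ∩ R := by
  have hx := mem_inter.1 h.mem
  exact (subset_inter (cliqueClass_subset h.left hx.1) (cliqueClass_subset h.right hx.2)).antisymm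
    fun y hy => mem_cliqueClass.2 fun T hT hxT => h.inter_subset hG hT hxT hy

theorem IsFull.card_cliqueClass (hG : DegreeCliqueBound G e) (hx : IsFull G e x) :
    (cliqueClass G e x).card + 2 = e := by
  obtain ⟨Q, R, h⟩ := hx
  rw [h.cliqueClass_eq hG, h.card_inter]

theorem IsFull.of_mem_cliqueClass (hG : DegreeCliqueBound G e) (hx : IsFull G e x)
    (hy : y ∈ cliqueClass G e x) : IsFull G e y := by
  obtain ⟨Q, R, h⟩ := hx
  rw [h.cliqueClass_eq hG] at hy
  exact ⟨Q, R, h.of_mem hy⟩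

theorem IsFull.cliqueClass_eq_of_mem (hG : DegreeCliqueBound G e) (hx : IsFull G e x)
    (hy : y ∈ cliqueClass G e x) : cliqueClass G e y = cliqueClass G e x := by
  obtain ⟨Q, R, h⟩ := hx
  rw [h.cliqueClass_eq hG] at hy ⊢
  exact (h.of_mem hy).cliqueClass_eq hG

theorem IsFull.closedNbhd_eq_of_mem (hG : DegreeCliqueBound G e) (hx : IsFull G e x)
    (hy : y ∈ cliqueClass G e x) : closedNbhd G y = closedNbhd G x := by
  obtain ⟨Q, R, h⟩ := hx
  rw [h.cliqueClass_eq hG] at hy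
  rw [← h.union_eq hG, ← (h.of_mem hy).union_eq hG]

theorem IsFull.card_closedNbhd (hG : DegreeCliqueBound G e) (hx : IsFull G e x) :
    (closedNbhd G x).card = e + 2 := by
  obtain ⟨Q, R, h⟩ := hx
  rw [← h.union_eq hG, h.card_union]

theorem IsFull.exists_isNClique_of_adj (hG : DegreeCliqueBound G e) (hx : IsFull G e x)
    (hxy : G.Adj x y) : ∃ Q, G.IsNClique e Q ∧ x ∈ Q ∧ y ∈ Q := by
  obtain ⟨Q, R, h⟩ := hx
  have hxQR := mem_inter.1 h.mem
  have hy : y ∈ Q ∪ R := h.union_eq hG ▸ mem_closedNbhd.2 (.inr hxy)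
  obtain hy | hy := mem_union.1 hy
  · exact ⟨Q, h.left, hxQR.1, hy⟩
  · exact ⟨R, h.right, hxQR.2, hy⟩

theorem IsFull.disjoint_cliqueClass (hG : DegreeCliqueBound G e) (hx : IsFull G e x)
    (hy : IsFull G e y) (hne : cliqueClass G e x ≠ cliqueClass G e y) :
    Disjoint (cliqueClass G e x) (cliqueClass G e y) :=
  disjoint_left.2 fun _ hzx hzy =>
    hne ((hx.cliqueClass_eq_of_mem hG hzx).symm.trans (hy.cliqueClass_eq_of_mem hG hzy))

theorem IsFull.cliqueClass_eq_of_adj (hG : DegreeCliqueBound G e) (he : 5 ≤ e)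
    (hx : IsFull G e x) (hy : IsFull G e y) (hxy : G.Adj x y) :
    cliqueClass G e x = cliqueClass G e y := by
  by_contra hne
  obtain ⟨Q, hQ, hxQ, hyQ⟩ := hx.exists_isNClique_of_adj hG hxy
  have hcard := card_le_card (union_subset (cliqueClass_subset hQ hxQ) (cliqueClass_subset hQ hyQ))
  rw [card_union_of_disjoint (hx.disjoint_cliqueClass hG hy hne), hQ.card_eq] at hcard
  have hcx := hx.card_cliqueClass hG
  have hcy := hy.card_cliqueClass hG
  omega

/-- An `e`-clique without full vertices. -/
structure IsThinClique (G : SimpleGraph V) (e : ℕ) (Q : Finset V) : Prop where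
  isNClique : G.IsNClique e Q
  not_isFull : ∀ x ∈ Q, ¬ IsFull G e x

theorem IsThinClique.le_card_inter (hG : DegreeCliqueBound G e) (hQ : IsThinClique G e Q)
    (hR : G.IsNClique e R) (hQR : (Q ∩ R).Nonempty) : e ≤ (Q ∩ R).card + 1 := by
  have hcard := hG.le_card_inter hQ.isNClique hR hQR
  obtain ⟨x, hx⟩ := hQR
  by_contra hlt
  exact hQ.not_isFull x (mem_inter.1 hx).1 ⟨Q, R, hQ.isNClique, hR, hx, by omega⟩

theorem IsThinClique.of_meets (hG : DegreeCliqueBound G e) (he : 4 ≤ e) (hQ : IsThinClique G e Q)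
    (hR : G.IsNClique e R) (hQR : (Q ∩ R).Nonempty) : IsThinClique G e R := by
  refine ⟨hR, fun y hyR hy => ?_⟩
  have hsub : cliqueClass G e y ⊆ R \ Q := fun z hz => mem_sdiff.2
    ⟨cliqueClass_subset hR hyR hz, fun hzQ => hQ.not_isFull z hzQ (hy.of_mem_cliqueClass hG hz)⟩
  have hle := card_le_card hsub
  have hclass := hy.card_cliqueClass hG
  have hinter := hQ.le_card_inter hG hR hQR
  have hsum := card_sdiff_add_card_inter R Q
  rw [inter_comm, hR.card_eq] at hsum
  omega

theorem IsThinClique.not_adj_of_isFull (hG : DegreeCliqueBound G e) (he : 4 ≤ e)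
    (hQ : IsThinClique G e Q) (hy : y ∈ Q) (hx : IsFull G e x) : ¬ G.Adj y x := by
  intro hyx
  obtain ⟨R, hR, hxR, hyR⟩ := hx.exists_isNClique_of_adj hG hyx.symm
  exact (hQ.of_meets hG he hR ⟨y, mem_inter.2 ⟨hy, hyR⟩⟩).not_isFull x hxR hx

theorem IsThinClique.meets_trans (hG : DegreeCliqueBound G e) (he : 4 ≤ e)
    (hQ : IsThinClique G e Q) (hR : G.IsNClique e R) (hT : G.IsNClique e T)
    (hQR : (Q ∩ R).Nonempty) (hRT : (R ∩ T).Nonempty) : (Q ∩ T).Nonempty := by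
  have hcardQ := hQ.le_card_inter hG hR hQR
  have hcardT := (hQ.of_meets hG he hR hQR).le_card_inter hG hT hRT
  have hsub : (Q ∩ R) ∪ (R ∩ T) ⊆ R := union_subset inter_subset_right inter_subset_left
  have hcard := (card_le_card hsub).trans_eq hR.card_eq
  have hsum := card_union_add_card_inter (Q ∩ R) (R ∩ T)
  have hpos : 0 < ((Q ∩ R) ∩ (R ∩ T)).card := by omega
  exact (card_pos.1 hpos).mono (inter_subset_inter inter_subset_left inter_subset_right)

/-- The vertices that lie in every `e`-clique meeting `Q`. -/
noncomputable def core (G : SimpleGraph V) (e : ℕ) (Q : Finset V) : Finset V :=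
  {y | ∀ R, G.IsNClique e R → (Q ∩ R).Nonempty → y ∈ R}

theorem mem_core : y ∈ core G e Q ↔ ∀ R, G.IsNClique e R → (Q ∩ R).Nonempty → y ∈ R :=
  mem_filter_univ _

theorem core_subset (hR : G.IsNClique e R) (hQR : (Q ∩ R).Nonempty) : core G e Q ⊆ R :=
  fun _ hy => mem_core.1 hy R hR hQR

theorem IsThinClique.core_eq (hG : DegreeCliqueBound G e) (he : 4 ≤ e) (hQ : IsThinClique G e Q)
    (hR : G.IsNClique e R) (hQR : (Q ∩ R).Nonempty) : core G e Q = core G e R := by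
  have hRQ : (R ∩ Q).Nonempty := inter_comm Q R ▸ hQR
  refine ext fun y => ?_
  rw [mem_core, mem_core]
  exact ⟨fun hy T hT hRT => hy T hT (hQ.meets_trans hG he hR hT hQR hRT), fun hy T hT hQT =>
    hy T hT ((hQ.of_meets hG he hR hQR).meets_trans hG he hQ.isNClique hT hRQ hQT)⟩

theorem IsThinClique.erase_subset_of_notMem (hG : DegreeCliqueBound G e) (hQ : IsThinClique G e Q)
    (hT : G.IsNClique e T) (hQT : (Q ∩ T).Nonempty) (hy : y ∈ Q) (hyT : y ∉ T) :
    Q.erase y ⊆ T := by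
  have hinter := hQ.le_card_inter hG hT hQT
  have hsum := card_sdiff_add_card_inter Q T
  rw [hQ.isNClique.card_eq] at hsum
  intro z hz
  rw [mem_erase] at hz
  by_contra hzT
  exact hz.1 (card_le_one.1 (by omega) z (mem_sdiff.2 ⟨hz.2, hzT⟩) y (mem_sdiff.2 ⟨hy, hyT⟩))

theorem IsThinClique.inter_subset_core (hG : DegreeCliqueBound G e) (he : 4 ≤ e)
    (hQ : IsThinClique G e Q) (hR : G.IsNClique e R) (hQR : (Q ∩ R).Nonempty) (hne : Q ≠ R) :
    Q ∩ R ⊆ core G e Q := by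
  have hRQ : (R ∩ Q).Nonempty := inter_comm Q R ▸ hQR
  have hRthin := hQ.of_meets hG he hR hQR
  refine fun y hy => mem_core.2 fun T hT hQT => by_contra fun hyT => ?_
  obtain ⟨hyQ, hyR⟩ := mem_inter.1 hy
  have hsub : (Q ∪ R).erase y ⊆ T := by
    rw [erase_union_distrib]
    exact union_subset (hQ.erase_subset_of_notMem hG hT hQT hyQ hyT)
      (hRthin.erase_subset_of_notMem hG hT
        (hRthin.meets_trans hG he hQ.isNClique hT hRQ hQT) hyR hyT)
  have hclique : G.IsClique (Q ∪ R : Finset V) := by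
    rw [← insert_erase (mem_union_left R hyQ)]
    exact isClique_insert_of_subset_closedNbhd (hT.isClique.subset hsub)
      ((erase_subset _ _).trans (union_subset (subset_closedNbhd_of_isClique hQ.isNClique.isClique
        hyQ) (subset_closedNbhd_of_isClique hR.isClique hyR)))
  have hle := hG.card_le hclique
  refine hne ((eq_of_subset_of_card_le subset_union_left ?_).trans
    (eq_of_subset_of_card_le subset_union_right ?_).symm)
  · rwa [hQ.isNClique.card_eq]
  · rwa [hR.card_eq]

theorem IsThinClique.exists_core_eq_inter (hG : DegreeCliqueBound G e) (he : 4 ≤ e)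
    (hQ : IsThinClique G e Q) :
    ∃ R, G.IsNClique e R ∧ core G e Q = Q ∩ R ∧ e ≤ (core G e Q).card + 1 := by
  have hQQ : (Q ∩ Q).Nonempty := by
    rw [inter_self, ← card_pos, hQ.isNClique.card_eq]
    omega
  suffices ∃ R, G.IsNClique e R ∧ (Q ∩ R).Nonempty ∧ Q ∩ R ⊆ core G e Q by
    obtain ⟨R, hR, hQR, hsub⟩ := this
    have hcore : core G e Q = Q ∩ R :=
      (subset_inter (core_subset hQ.isNClique hQQ) (core_subset hR hQR)).antisymm hsub
    exact ⟨R, hR, hcore, hcore ▸ hQ.le_card_inter hG hR hQR⟩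
  by_cases hother : ∃ R, G.IsNClique e R ∧ (Q ∩ R).Nonempty ∧ Q ≠ R
  · obtain ⟨R, hR, hQR, hne⟩ := hother
    exact ⟨R, hR, hQR, hQ.inter_subset_core hG he hR hQR hne⟩
  · push Not at hother
    refine ⟨Q, hQ.isNClique, hQQ, fun y hy => mem_core.2 fun R hR hQR => ?_⟩
    exact hother R hR hQR ▸ (mem_inter.1 hy).1

end MaxCliques

/-! ### An independent set meeting every maximum clique -/

section Reduction

variable {V : Type*} [Fintype V] {G : SimpleGraph V} {e : ℕ} {Q R I : Finset V}

/-- The edges of `G` that lie in no `e`-clique. -/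
def sparseGraph (G : SimpleGraph V) (e : ℕ) : SimpleGraph V where
  Adj a b := G.Adj a b ∧ ∀ Q, G.IsNClique e Q → a ∈ Q → b ∉ Q
  symm := ⟨fun _ _ h => ⟨h.1.symm, fun Q hQ hb ha => h.2 Q hQ ha hb⟩⟩
  loopless := ⟨fun _ h => h.1.ne rfl⟩

theorem degree_sparseGraph_add_card_union_le (hG : DegreeCliqueBound G e)
    (hQ : G.IsNClique e Q) (hR : G.IsNClique e R) {v : V} (hv : v ∈ Q ∩ R) :
    (sparseGraph G e).degree v + (Q ∪ R).card ≤ e + 2 := by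
  rw [mem_inter] at hv
  have hsub : (sparseGraph G e).neighborFinset v ⊆ closedNbhd G v \ (Q ∪ R) := by
    intro w hw
    rw [SimpleGraph.mem_neighborFinset] at hw
    rw [mem_sdiff, mem_union, not_or]
    exact ⟨mem_closedNbhd.2 (.inr hw.1), hw.2 Q hQ hv.1, hw.2 R hR hv.2⟩
  have hle := card_le_card hsub
  rw [SimpleGraph.card_neighborFinset_eq_degree, card_sdiff_of_subset (union_subset
    (subset_closedNbhd_of_isClique hQ.isClique hv.1)
    (subset_closedNbhd_of_isClique hR.isClique hv.2))] at hle
  have hnbhd := hG.card_closedNbhd_le v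
  have hunion := card_le_card (union_subset
    (subset_closedNbhd_of_isClique hQ.isClique hv.1)
    (subset_closedNbhd_of_isClique hR.isClique hv.2))
  omega

theorem IsThinClique.degree_sparseGraph_le (hG : DegreeCliqueBound G e) (he : 4 ≤ e)
    (hQ : IsThinClique G e Q) {v : V} (hv : v ∈ core G e Q) :
    (sparseGraph G e).degree v ≤ 2 ∧
      (sparseGraph G e).degree v + 2 ≤ (core G e Q).card := by
  obtain ⟨R, hR, hcore, -⟩ := hQ.exists_core_eq_inter hG he
  rw [hcore] at hv ⊢
  have hdeg := degree_sparseGraph_add_card_union_le hG hQ.isNClique hR hv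
  have hsum := card_union_add_card_inter Q R
  have hle := card_le_card (inter_subset_left (s₁ := Q) (s₂ := R))
  rw [hQ.isNClique.card_eq, hR.card_eq] at hsum
  rw [hQ.isNClique.card_eq] at hle
  omega

theorem IsThinClique.core_subset_self (he : 4 ≤ e) (hQ : IsThinClique G e Q) :
    core G e Q ⊆ Q := by
  refine core_subset hQ.isNClique ?_
  rw [inter_self, ← card_pos, hQ.isNClique.card_eq]
  omega

theorem IsThinClique.core_eq_of_mem (hG : DegreeCliqueBound G e) (he : 4 ≤ e)
    (hQ : IsThinClique G e Q) {v : V} (hv : v ∈ core G e Q) (hR : G.IsNClique e R)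
    (hvR : v ∈ R) : core G e Q = core G e R :=
  hQ.core_eq hG he hR ⟨v, mem_inter.2 ⟨hQ.core_subset_self he hv, hvR⟩⟩

/- Haxell's theorem applied to the cores: it suffices to hit these, and a core has at least two
more vertices than any of its vertices has neighbours in `sparseGraph G e`. -/
theorem exists_isIndepSet_meeting_thinCliques [Nonempty V] (hG : DegreeCliqueBound G e)
    (he : 4 ≤ e) :
    ∃ T : Finset V, G.IsIndepSet T ∧ (∀ Q, IsThinClique G e Q → (Q ∩ T).Nonempty) ∧
      ∀ t ∈ T, ∃ Q, IsThinClique G e Q ∧ t ∈ Q := by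
  obtain ⟨J, hJ⟩ : ∃ J : Finset (Finset V),
      ∀ C, C ∈ J ↔ ∃ Q, IsThinClique G e Q ∧ core G e Q = C :=
    ⟨image (core G e) {Q | IsThinClique G e Q}, by simp⟩
  have hsame : ∀ C ∈ J, ∀ C' ∈ J, ∀ R, G.IsNClique e R → ∀ v ∈ C, v ∈ R → ∀ v' ∈ C', v' ∈ R →
      C = C' := by
    intro C hC C' hC' R hR v hv hvR v' hv' hvR'
    obtain ⟨Q, hQ, rfl⟩ := (hJ C).1 hC
    obtain ⟨Q', hQ', rfl⟩ := (hJ C').1 hC'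
    exact (hQ.core_eq_of_mem hG he hv hR hvR).trans (hQ'.core_eq_of_mem hG he hv' hR hvR').symm
  obtain ⟨f, hf⟩ := exists_isIndepTransversal (G := sparseGraph G e) (J := J) (P := id) (D := 2)
    (fun C hC C' hC' hne => disjoint_left.2 fun v hv hv' => by
      obtain ⟨Q, hQ, rfl⟩ := (hJ C).1 hC
      have hvQ := hQ.core_subset_self he hv
      exact hne (hsame _ hC C' hC' Q hQ.isNClique v hv hvQ v hv' hvQ))
    (fun C hC => by
      obtain ⟨Q, hQ, rfl⟩ := (hJ C).1 hC
      obtain ⟨R, -, -, hcard⟩ := hQ.exists_core_eq_inter hG he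
      exact card_pos.1 (by rw [id]; omega))
    (fun C hC v hv => by
      obtain ⟨Q, hQ, rfl⟩ := (hJ C).1 hC
      exact hQ.degree_sparseGraph_le hG he hv)
  refine ⟨J.image f, ?_, fun Q hQ => ?_, fun t ht => ?_⟩
  · intro a ha b hb hab hadj
    obtain ⟨C, hC, rfl⟩ := mem_image.1 ha
    obtain ⟨C', hC', rfl⟩ := mem_image.1 hb
    refine hf.not_adj C hC C' hC' ⟨hadj, fun R hR hCR hCR' => hab ?_⟩
    rw [hsame C hC C' hC' R hR _ (hf.mem C hC) hCR _ (hf.mem C' hC') hCR']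
  · have hC : core G e Q ∈ J := (hJ _).2 ⟨Q, hQ, rfl⟩
    exact ⟨f _, mem_inter.2 ⟨hQ.core_subset_self he (hf.mem _ hC), mem_image_of_mem f hC⟩⟩
  · obtain ⟨C, hC, rfl⟩ := mem_image.1 ht
    obtain ⟨Q, hQ, rfl⟩ := (hJ C).1 hC
    exact ⟨Q, hQ, hQ.core_subset_self he (hf.mem _ hC)⟩

theorem isIndepSet_union_of_isFull {S T : Finset V} (hG : DegreeCliqueBound G e) (he : 4 ≤ e)
    (hT : G.IsIndepSet T) (hTthin : ∀ t ∈ T, ∃ Q, IsThinClique G e Q ∧ t ∈ Q)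
    (hS : G.IsIndepSet S) (hSfull : ∀ s ∈ S, IsFull G e s) :
    G.IsIndepSet (T ∪ S : Finset V) := by
  have hTS : ∀ t ∈ T, ∀ s ∈ S, ¬ G.Adj t s := by
    intro t ht s hs
    obtain ⟨Q, hQ, htQ⟩ := hTthin t ht
    exact hQ.not_adj_of_isFull hG he htQ (hSfull s hs)
  intro a ha b hb hab
  rw [coe_union] at ha hb
  obtain ha | ha := ha <;> obtain hb | hb := hb
  · exact hT ha hb hab
  · exact hTS a ha b hb
  · exact fun h => hTS b hb a ha h.symm
  · exact hS ha hb hab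

theorem DegreeCliqueBound.deleteVerts_of_dominating {S : Finset V}
    (hG : DegreeCliqueBound G (e + 1)) (hdom : ∀ v, v ∉ S → ∃ s ∈ S, G.Adj v s)
    (hmeet : ∀ Q, G.IsNClique (e + 1) Q → ¬ Disjoint Q S) (he : 1 ≤ e) :
    DegreeCliqueBound (deleteVerts G S) e where
  degree_le v := by
    by_cases hv : v ∈ S
    · have hempty : (deleteVerts G S).neighborFinset v = ∅ := by
        refine eq_empty_of_forall_notMem fun w hw => ?_
        rw [SimpleGraph.mem_neighborFinset] at hw
        exact hw.2.1 hv
      rw [← SimpleGraph.card_neighborFinset_eq_degree, hempty]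
      exact Nat.zero_le _
    · obtain ⟨s, hs, hvs⟩ := hdom v hv
      have hsub : (deleteVerts G S).neighborFinset v ⊆
          (G.neighborFinset v).erase s := by
        intro w hw
        rw [SimpleGraph.mem_neighborFinset] at hw
        rw [mem_erase, SimpleGraph.mem_neighborFinset]
        exact ⟨fun hws => hw.2.2 (hws ▸ hs), hw.1⟩
      have hle := card_le_card hsub
      rw [card_erase_of_mem ((G.mem_neighborFinset v s).2 hvs)] at hle
      simp only [SimpleGraph.card_neighborFinset_eq_degree] at hle
      have := hG.degree_le v
      omega
  cliqueFree Q hQ := hmeet Q (hQ.mono (deleteVerts_le G S))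
    (disjoint_of_isClique_deleteVerts hQ.isClique (by rw [hQ.card_eq]; omega))

theorem exists_isIndepSet_degreeCliqueBound_deleteVerts (hG : DegreeCliqueBound G (e + 1))
    (he : 4 ≤ e) :
    ∃ I : Finset V, G.IsIndepSet I ∧ DegreeCliqueBound (deleteVerts G I) e := by
  obtain hV | hV := isEmpty_or_nonempty V
  · exact ⟨∅, by simp, hG.deleteVerts_of_dominating isEmptyElim
      (fun Q hQ => by simp [eq_empty_of_isEmpty Q, SimpleGraph.isNClique_iff] at hQ) (by omega)⟩
  obtain ⟨T, hT, hTmeets, hTthin⟩ := exists_isIndepSet_meeting_thinCliques hG (by omega)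
  obtain ⟨S, hS, -, hSfull, hSdom⟩ := exists_dominating_isIndepSet (G := G) (S := ∅)
    (A := {v | IsFull G (e + 1) v}) (by simp) (empty_subset _)
  have hfull : ∀ s ∈ S, IsFull G (e + 1) s := fun s hs => (mem_filter_univ s).1 (hSfull hs)
  obtain ⟨I, hI, hTSI, -, hIdom⟩ := exists_dominating_isIndepSet
    (isIndepSet_union_of_isFull hG (by omega) hT hTthin hS hfull) (subset_univ _)
  refine ⟨I, hI, hG.deleteVerts_of_dominating (fun v => hIdom v (mem_univ v))
    (fun Q hQ hQI => ?_) (by omega)⟩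
  have hQTS := hQI.mono_right hTSI
  rw [disjoint_union_right] at hQTS
  by_cases hthin : IsThinClique G (e + 1) Q
  · exact (hTmeets Q hthin).ne_empty (disjoint_iff_inter_eq_empty.1 hQTS.1)
  · obtain ⟨x, hxQ, hx⟩ : ∃ x ∈ Q, IsFull G (e + 1) x := by
      by_contra! hcon
      exact hthin ⟨hQ, hcon⟩
    obtain ⟨s, hs, hxs⟩ := hSdom x ((mem_filter_univ x).2 hx) (disjoint_left.1 hQTS.2 hxQ)
    have hsQ : s ∈ Q := cliqueClass_subset hQ hxQ
      (hx.cliqueClass_eq_of_adj hG (by omega) (hfull s hs) hxs ▸ self_mem_cliqueClass G _ s)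
    exact disjoint_left.1 hQTS.2 hsQ hs

end Reduction

/-! ### Extending a two-colouring over a six-clique -/

section Colorings

variable {V α : Type*} {G H : SimpleGraph V} {r : ℕ} {c : V → α} {κ : α} {Q : Finset V}

/-- Each colour class of `c` induces a `K_r`-free subgraph of `G`. -/
def IsCliqueFreeColoring (G : SimpleGraph V) (r : ℕ) (c : V → α) : Prop :=
  ∀ κ, G.CliqueFreeOn (c ⁻¹' {κ}) r

theorem IsCliqueFreeColoring.anti (hc : IsCliqueFreeColoring G r c) (hle : H ≤ G) :
    IsCliqueFreeColoring H r c :=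
  fun κ _ hκ hQ => hc κ hκ (hQ.mono hle)

theorem IsCliqueFreeColoring.exists_ne (hc : IsCliqueFreeColoring G r c) (hQ : G.IsNClique r Q)
    (κ : α) : ∃ v ∈ Q, c v ≠ κ := by
  by_contra! hcon
  exact hc κ hcon hQ

theorem isCliqueFreeColoring_iff :
    IsCliqueFreeColoring G r c ↔ ∀ Q κ, G.IsNClique r Q → ¬ ∀ v ∈ Q, c v = κ :=
  ⟨fun hc _ κ hQ hκ => hc κ hκ hQ, fun h κ _ hκ hQ => h _ κ hQ hκ⟩

theorem card_inter_lt_card_of_ne {Z : Finset V} {a b : V} (hQ : ∀ v ∈ Q, c v = κ) (ha : a ∈ Z)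
    (hb : b ∈ Z) (hab : c a ≠ c b) : (Q ∩ Z).card < Z.card := by
  refine card_lt_card ⟨inter_subset_right, fun hZ => hab ?_⟩
  rw [hQ a (mem_inter.1 (hZ ha)).1, hQ b (mem_inter.1 (hZ hb)).1]

end Colorings

section SixClique

variable {V : Type*} [Fintype V] {G : SimpleGraph V} {M N N' A B D U W : Finset V}
  {c : V → Bool} {κ : Bool} {a b d u v : V}

/-- The neighbours of `v` outside `M`. -/
noncomputable def outerNbhd (G : SimpleGraph V) (M : Finset V) (v : V) : Finset V :=
  G.neighborFinset v \ M

theorem mem_outerNbhd : u ∈ outerNbhd G M v ↔ G.Adj v u ∧ u ∉ M := by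
  rw [outerNbhd, mem_sdiff, SimpleGraph.mem_neighborFinset]

theorem card_outerNbhd_add_card_le (hAM : A ⊆ M) (hA : ∀ a ∈ A, G.Adj v a) :
    (outerNbhd G M v).card + A.card ≤ G.degree v := by
  rw [outerNbhd, ← card_union_of_disjoint (disjoint_sdiff_self_left.mono_right hAM),
    ← SimpleGraph.card_neighborFinset_eq_degree]
  exact card_le_card (union_subset sdiff_subset fun a ha =>
    (SimpleGraph.mem_neighborFinset _ _ _).2 (hA a ha))

theorem sdiff_subset_outerNbhd {Q : Finset V} (hQ : G.IsClique Q) (ha : a ∈ Q) (haM : a ∈ M) :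
    Q \ M ⊆ outerNbhd G M a := by
  intro y hy
  rw [mem_sdiff] at hy
  exact mem_outerNbhd.2 ⟨hQ ha hy.1 (ne_of_mem_of_not_mem haM hy.2), hy.2⟩

/-- Giving the colour `κ` to the vertices of `N ⊆ M` creates no monochromatic `K_4`, provided `c`
creates none outside `M` and all outer neighbourhoods have at most two vertices. -/
structure IsSafe (G : SimpleGraph V) (M : Finset V) (c : V → Bool) (N : Finset V)
    (κ : Bool) : Prop where
  card_le : N.card ≤ 3
  exists_notMem : ∀ y, c y = κ → ∃ m ∈ N, y ∉ outerNbhd G M m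
  card_common_le : (N : Set V).Pairwise fun a b =>
    #{y ∈ outerNbhd G M a ∩ outerNbhd G M b | c y = κ} ≤ 1

theorem IsSafe.not_isNClique (hN : IsSafe G M c N κ)
    (houter : ∀ m ∈ M, (outerNbhd G M m).card ≤ 2) {Q : Finset V} (hQM : (Q ∩ M).Nonempty)
    (hQN : Q ∩ M ⊆ N) (hQκ : ∀ y ∈ Q \ M, c y = κ) : ¬ G.IsNClique 4 Q := by
  intro hQ
  have hsub : ∀ m ∈ Q ∩ M, Q \ M ⊆ outerNbhd G M m := fun m hm =>
    sdiff_subset_outerNbhd hQ.isClique (mem_inter.1 hm).1 (mem_inter.1 hm).2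
  obtain ⟨m, hm⟩ := hQM
  have hsum := card_sdiff_add_card_inter Q M
  have hsdiff := (card_le_card (hsub m hm)).trans (houter m (mem_inter.1 hm).2)
  have hinter := (card_le_card hQN).trans hN.card_le
  rw [hQ.card_eq] at hsum
  obtain h2 | h3 : (Q ∩ M).card = 2 ∨ (Q ∩ M).card = 3 := by omega
  · obtain ⟨a, ha, b, hb, hab⟩ := one_lt_card.1 (by omega : 1 < (Q ∩ M).card)
    have hcommon : Q \ M ⊆ {y ∈ outerNbhd G M a ∩ outerNbhd G M b | c y = κ} := fun y hy =>
      mem_filter.2 ⟨mem_inter.2 ⟨hsub a ha hy, hsub b hb hy⟩, hQκ y hy⟩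
    have hle := (card_le_card hcommon).trans (hN.card_common_le (hQN ha) (hQN hb) hab)
    omega
  · have hQMN : Q ∩ M = N := eq_of_subset_of_card_le hQN (h3 ▸ hN.card_le)
    obtain ⟨y, hy⟩ := card_pos.1 (by omega : 0 < (Q \ M).card)
    obtain ⟨m', hm', hym'⟩ := hN.exists_notMem y (hQκ y hy)
    exact hym' (hsub m' (hQMN ▸ hm') hy)

theorem IsSafe.exists_coloring (hN : IsSafe G M c N κ) (hN' : IsSafe G M c N' (!κ))
    (hM : M = N ∪ N') (houter : ∀ m ∈ M, (outerNbhd G M m).card ≤ 2)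
    (hc : IsCliqueFreeColoring (deleteVerts G M) 4 c) :
    ∃ c' : V → Bool, IsCliqueFreeColoring G 4 c' := by
  refine ⟨fun v => if v ∈ N then κ else if v ∈ N' then !κ else c v,
    isCliqueFreeColoring_iff.2 fun Q μ hQ hμ => ?_⟩
  have hout : ∀ y ∈ Q \ M, c y = μ := by
    intro y hy
    rw [mem_sdiff, hM, mem_union, not_or] at hy
    simpa only [if_neg hy.2.1, if_neg hy.2.2] using hμ y hy.1
  obtain hQM | hQM := (Q ∩ M).eq_empty_or_nonempty
  · have hdisj := disjoint_iff_inter_eq_empty.2 hQM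
    obtain ⟨v, hv, hne⟩ := hc.exists_ne
      ⟨isClique_deleteVerts hQ.isClique hdisj, hQ.card_eq⟩ μ
    exact hne (hout v (mem_sdiff.2 ⟨hv, disjoint_left.1 hdisj hv⟩))
  · obtain rfl | rfl : μ = κ ∨ μ = !κ := by cases μ <;> cases κ <;> simp
    · refine hN.not_isNClique houter hQM (fun v hv => by_contra fun hvN => ?_) hout hQ
      rw [mem_inter, hM, mem_union] at hv
      simpa [hvN, hv.2.resolve_left hvN] using hμ v hv.1
    · refine hN'.not_isNClique houter hQM (fun v hv => by_contra fun hvN' => ?_) hout hQ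
      rw [mem_inter, hM, mem_union] at hv
      simpa [hv.2.resolve_right hvN'] using hμ v hv.1

/-- The outer neighbourhood of `d` is the monochromatic set `X` of colour `κ`. -/
def Blocks (G : SimpleGraph V) (M : Finset V) (c : V → Bool) (X : Finset V) (d : V)
    (κ : Bool) : Prop :=
  outerNbhd G M d = X ∧ ∀ x ∈ X, c x = κ

theorem card_common_le_of_not_blocks {X : Finset V} (ha : outerNbhd G M a = X) (hX : X.card = 2)
    (hd : (outerNbhd G M d).card ≤ 2) (hblocks : ¬ Blocks G M c X d κ) :
    #{y ∈ outerNbhd G M a ∩ outerNbhd G M d | c y = κ} ≤ 1 := by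
  subst ha
  by_contra hcard
  have hsub : {y ∈ outerNbhd G M a ∩ outerNbhd G M d | c y = κ} ⊆ outerNbhd G M a :=
    (filter_subset _ _).trans inter_subset_left
  have hsub' : {y ∈ outerNbhd G M a ∩ outerNbhd G M d | c y = κ} ⊆ outerNbhd G M d :=
    (filter_subset _ _).trans inter_subset_right
  have heq := eq_of_subset_of_card_le hsub (by omega)
  refine hblocks ⟨(eq_of_subset_of_card_le hsub' (by omega)).symm.trans heq, fun x hx => ?_⟩
  rw [← heq] at hx
  exact (mem_filter.1 hx).2

theorem isSafe_triple (ha : outerNbhd G M a = U) (hb : outerNbhd G M b = W) (hU : U.card = 2)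
    (hW : W.card = 2) (hUW : Disjoint U W) (hd : (outerNbhd G M d).card ≤ 2)
    (hdU : ¬ Blocks G M c U d κ) (hdW : ¬ Blocks G M c W d κ) : IsSafe G M c {a, b, d} κ where
  card_le := card_le_three
  exists_notMem y _ := by
    by_cases hy : y ∈ U
    · exact ⟨b, by simp, hb ▸ disjoint_left.1 hUW hy⟩
    · exact ⟨a, by simp, ha ▸ hy⟩
  card_common_le := by
    have hsymm : Std.Symm fun a b : V =>
        #{y ∈ outerNbhd G M a ∩ outerNbhd G M b | c y = κ} ≤ 1 :=
      ⟨fun a b h => by rwa [inter_comm]⟩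
    have hab : #{y ∈ outerNbhd G M a ∩ outerNbhd G M b | c y = κ} ≤ 1 := by
      rw [ha, hb, disjoint_iff_inter_eq_empty.1 hUW]
      exact Nat.zero_le _
    rw [coe_insert, coe_insert, coe_singleton, Set.pairwise_insert_of_symm,
      Set.pairwise_insert_of_symm]
    refine ⟨⟨Set.pairwise_singleton _ _, ?_⟩, ?_⟩
    · rintro x rfl -
      exact card_common_le_of_not_blocks hb hW hd hdW
    · rintro x (rfl | rfl) -
      exacts [hab, card_common_le_of_not_blocks ha hU hd hdU]

theorem isSafe_of_outerNbhd_eq (hN : N.Nonempty) (hcard : N.card ≤ 3)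
    (hNU : ∀ m ∈ N, outerNbhd G M m = U) (hU : ∀ u ∈ U, c u ≠ κ) : IsSafe G M c N κ where
  card_le := hcard
  exists_notMem y hy := by
    obtain ⟨m, hm⟩ := hN
    exact ⟨m, hm, hNU m hm ▸ fun hyU => hU y hyU hy⟩
  card_common_le m hm m' _ _ := by
    simp only
    rw [hNU m hm, filter_eq_empty_iff.2 fun y hy => hU y (mem_inter.1 hy).1]
    exact Nat.zero_le _

/-- A six-clique `M` split into pairs `A`, `B`, `D`, where the vertices of `A` have the common
outer neighbourhood `U`, those of `B` the common outer neighbourhood `W`, and `U` and `W` are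
disjoint edges. -/
structure SixCliqueConfig (G : SimpleGraph V) (M A B D U W : Finset V) : Prop where
  isNClique : G.IsNClique 6 M
  eq_union : M = A ∪ B ∪ D
  card_A : A.card = 2
  card_B : B.card = 2
  card_D : D.card = 2
  outerNbhd_A : ∀ a ∈ A, outerNbhd G M a = U
  outerNbhd_B : ∀ b ∈ B, outerNbhd G M b = W
  isNClique_U : G.IsNClique 2 U
  isNClique_W : G.IsNClique 2 W
  disjoint_UW : Disjoint U W

namespace SixCliqueConfig

theorem symm (h : SixCliqueConfig G M A B D U W) : SixCliqueConfig G M B A D W U :=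
  ⟨h.isNClique, by rw [h.eq_union, union_comm B A], h.card_B, h.card_A, h.card_D, h.outerNbhd_B,
    h.outerNbhd_A, h.isNClique_W, h.isNClique_U, h.disjoint_UW.symm⟩

theorem card_outerNbhd_le (h : SixCliqueConfig G M A B D U W) (hG : DegreeCliqueBound G 6)
    (m : V) (hm : m ∈ M) : (outerNbhd G M m).card ≤ 2 := by
  have hle := card_outerNbhd_add_card_le (G := G) (erase_subset m M) fun a ha =>
    h.isNClique.isClique hm (mem_of_mem_erase ha) (ne_of_mem_erase ha).symm
  rw [card_erase_of_mem hm, h.isNClique.card_eq] at hle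
  have := hG.degree_le m
  omega

theorem ne (h : SixCliqueConfig G M A B D U W) : U ≠ W := by
  obtain ⟨u, hu⟩ := card_pos.1 (h.isNClique_U.card_eq ▸ two_pos)
  exact fun heq => disjoint_left.1 h.disjoint_UW hu (heq ▸ hu)

theorem not_blocks_not (h : SixCliqueConfig G M A B D U W)
    (hd : Blocks G M c U d κ ∨ Blocks G M c W d κ) :
    ¬ (Blocks G M c U d (!κ) ∨ Blocks G M c W d (!κ)) := by
  obtain ⟨u, hu⟩ := card_pos.1 (h.isNClique_U.card_eq ▸ two_pos)
  obtain ⟨w, hw⟩ := card_pos.1 (h.isNClique_W.card_eq ▸ two_pos)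
  rintro (⟨hdU, hU⟩ | ⟨hdW, hW⟩) <;> obtain ⟨hdU', hU'⟩ | ⟨hdW', hW'⟩ := hd
  · exact (Bool.eq_not_self κ).1 ((hU' u hu).symm.trans (hU u hu))
  · exact h.ne (hdU.symm.trans hdW')
  · exact h.ne (hdU'.symm.trans hdW)
  · exact (Bool.eq_not_self κ).1 ((hW' w hw).symm.trans (hW w hw))

/- The two vertices of `D` and one of `A`, all attached to `U`, take the colour opposite to that of
`U`. -/
theorem exists_coloring_of_blocks (h : SixCliqueConfig G M A B D U W)
    (hG : DegreeCliqueBound G 6) (hc : IsCliqueFreeColoring (deleteVerts G M) 4 c)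
    (hD : ∀ d ∈ D, Blocks G M c U d κ) (hW : ¬ ∀ w ∈ W, c w = κ) :
    ∃ c' : V → Bool, IsCliqueFreeColoring G 4 c' := by
  obtain ⟨a₁, a₂, -, hA⟩ := card_eq_two.1 h.card_A
  obtain ⟨b₁, b₂, -, hB⟩ := card_eq_two.1 h.card_B
  obtain ⟨d₁, d₂, -, hDeq⟩ := card_eq_two.1 h.card_D
  have hb₂ : outerNbhd G M b₂ = W := h.outerNbhd_B b₂ (by simp [hB])
  refine IsSafe.exists_coloring (N := {a₁, b₁, b₂}) (N' := {a₂, d₁, d₂}) (κ := κ)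
    (isSafe_triple (h.outerNbhd_A a₁ (by simp [hA])) (h.outerNbhd_B b₁ (by simp [hB]))
      h.isNClique_U.card_eq h.isNClique_W.card_eq h.disjoint_UW
      (hb₂ ▸ h.isNClique_W.card_eq.le) (fun hU => h.ne (hU.1.symm.trans hb₂))
      fun hbW => hW hbW.2)
    (isSafe_of_outerNbhd_eq (U := U) (by simp) card_le_three ?_ fun u hu => ?_) ?_
    (h.card_outerNbhd_le hG) hc
  · simp only [mem_insert, mem_singleton, forall_eq_or_imp, forall_eq]
    exact ⟨h.outerNbhd_A a₂ (by simp [hA]), (hD d₁ (by simp [hDeq])).1,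
      (hD d₂ (by simp [hDeq])).1⟩
  · rw [(hD d₁ (by simp [hDeq])).2 u hu]
    exact (Bool.not_ne_self κ).symm
  · rw [h.eq_union, hA, hB, hDeq]
    grind

theorem exists_coloring_of_split (h : SixCliqueConfig G M A B D U W)
    (hG : DegreeCliqueBound G 6) (hc : IsCliqueFreeColoring (deleteVerts G M) 4 c)
    {d₁ d₂ : V} (hD : D = {d₁, d₂}) (hd₁ : ¬ (Blocks G M c U d₁ κ ∨ Blocks G M c W d₁ κ))
    (hd₂ : ¬ (Blocks G M c U d₂ (!κ) ∨ Blocks G M c W d₂ (!κ))) :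
    ∃ c' : V → Bool, IsCliqueFreeColoring G 4 c' := by
  obtain ⟨a₁, a₂, -, hA⟩ := card_eq_two.1 h.card_A
  obtain ⟨b₁, b₂, -, hB⟩ := card_eq_two.1 h.card_B
  rw [not_or] at hd₁ hd₂
  have houter : ∀ d ∈ D, (outerNbhd G M d).card ≤ 2 := fun d hd =>
    h.card_outerNbhd_le hG d (h.eq_union ▸ mem_union_right _ hd)
  have hsafe : ∀ {a b d : V} {κ : Bool}, a ∈ A → b ∈ B → d ∈ D → ¬ Blocks G M c U d κ →
      ¬ Blocks G M c W d κ → IsSafe G M c {a, b, d} κ := fun ha hb hd hdU hdW =>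
    isSafe_triple (h.outerNbhd_A _ ha) (h.outerNbhd_B _ hb) h.isNClique_U.card_eq
      h.isNClique_W.card_eq h.disjoint_UW (houter _ hd) hdU hdW
  refine IsSafe.exists_coloring (N := {a₁, b₁, d₁}) (N' := {a₂, b₂, d₂})
    (hsafe (by simp [hA]) (by simp [hB]) (by simp [hD]) hd₁.1 hd₁.2)
    (hsafe (by simp [hA]) (by simp [hB]) (by simp [hD]) hd₂.1 hd₂.2) ?_
    (h.card_outerNbhd_le hG) hc
  rw [h.eq_union, hA, hB, hD]
  grind

theorem exists_coloring_of_deleteVerts (h : SixCliqueConfig G M A B D U W)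
    (hG : DegreeCliqueBound G 6) (hc : IsCliqueFreeColoring (deleteVerts G M) 4 c)
    (hUWD : (∃ d ∈ D, outerNbhd G M d ≠ U ∧ outerNbhd G M d ≠ W) ∨
      ∀ κ, ¬ ((∀ u ∈ U, c u = κ) ∧ ∀ w ∈ W, c w = κ)) :
    ∃ c' : V → Bool, IsCliqueFreeColoring G 4 c' := by
  obtain ⟨d₁, d₂, -, hD⟩ := card_eq_two.1 h.card_D
  by_cases hsplit : ∃ κ, ¬ (Blocks G M c U d₁ κ ∨ Blocks G M c W d₁ κ) ∧
      ¬ (Blocks G M c U d₂ (!κ) ∨ Blocks G M c W d₂ (!κ))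
  · obtain ⟨κ, hd₁, hd₂⟩ := hsplit
    exact h.exists_coloring_of_split hG hc hD hd₁ hd₂
  obtain ⟨κ, hd₁, hd₂⟩ : ∃ κ, (Blocks G M c U d₁ κ ∨ Blocks G M c W d₁ κ) ∧
      (Blocks G M c U d₂ κ ∨ Blocks G M c W d₂ κ) := by
    push Not at hsplit
    by_cases htrue : Blocks G M c U d₁ true ∨ Blocks G M c W d₁ true
    · exact ⟨true, htrue, hsplit false (not_or.1 (h.not_blocks_not htrue))⟩
    · have hd₂ := hsplit true (not_or.1 htrue)
      refine ⟨false, by_contra fun hfalse => ?_, hd₂⟩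
      exact h.not_blocks_not hd₂ (hsplit false (not_or.1 hfalse))
  have hall : ∀ {X : Finset V}, Blocks G M c X d₁ κ → Blocks G M c X d₂ κ →
      ∀ d ∈ D, Blocks G M c X d κ := by
    intro X h₁ h₂ d hd
    rw [hD, mem_insert, mem_singleton] at hd
    obtain rfl | rfl := hd <;> assumption
  have hmono : ¬ ((∀ u ∈ U, c u = κ) ∧ ∀ w ∈ W, c w = κ) := by
    obtain ⟨d, hd, hdU, hdW⟩ | hUW := hUWD
    · rw [hD, mem_insert, mem_singleton] at hd
      obtain rfl | rfl := hd
      · exact absurd hd₁ (not_or.2 ⟨fun hb => hdU hb.1, fun hb => hdW hb.1⟩)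
      · exact absurd hd₂ (not_or.2 ⟨fun hb => hdU hb.1, fun hb => hdW hb.1⟩)
    · exact hUW κ
  obtain hd₁ | hd₁ := hd₁ <;> obtain hd₂ | hd₂ := hd₂
  · exact h.exists_coloring_of_blocks hG hc (hall hd₁ hd₂) fun hW => hmono ⟨hd₁.2, hW⟩
  · exact absurd ⟨hd₁.2, hd₂.2⟩ hmono
  · exact absurd ⟨hd₂.2, hd₁.2⟩ hmono
  · exact h.symm.exists_coloring_of_blocks hG hc (hall hd₁ hd₂) fun hU => hmono ⟨hU, hd₁.2⟩

end SixCliqueConfig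

end SixClique

section AlmostSevenClique

variable {V : Type*} [Fintype V] {F : SimpleGraph V} {T U W Q : Finset V} {c c' : V → Bool}
  {κ : Bool}

/-- `T` has seven vertices and is a clique except for the missing edges between its pairs `U` and
`W`, whose vertices have no neighbours outside `T`. -/
structure IsAlmostSevenClique (F : SimpleGraph V) (T U W : Finset V) : Prop where
  card_T : T.card = 7
  card_U : U.card = 2
  card_W : W.card = 2
  subset_U : U ⊆ T
  subset_W : W ⊆ T
  disjoint_UW : Disjoint U W
  closedNbhd_U : ∀ u ∈ U, closedNbhd F u ⊆ T \ W
  closedNbhd_W : ∀ w ∈ W, closedNbhd F w ⊆ T \ U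
  subset_closedNbhd : ∀ y ∈ T \ (U ∪ W), T ⊆ closedNbhd F y

namespace IsAlmostSevenClique

theorem symm (h : IsAlmostSevenClique F T U W) : IsAlmostSevenClique F T W U :=
  ⟨h.card_T, h.card_W, h.card_U, h.subset_W, h.subset_U, h.disjoint_UW.symm, h.closedNbhd_W,
    h.closedNbhd_U, union_comm U W ▸ h.subset_closedNbhd⟩

theorem card_sdiff (h : IsAlmostSevenClique F T U W) : (T \ (U ∪ W)).card = 3 := by
  rw [card_sdiff_of_subset (union_subset h.subset_U h.subset_W),
    card_union_of_disjoint h.disjoint_UW, h.card_T, h.card_U, h.card_W]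

theorem disjoint_of_card_inter_lt (h : IsAlmostSevenClique F T U W) (hQ : F.IsNClique 4 Q)
    (hU : (Q ∩ U).card < 2) (hY : (Q ∩ (T \ (U ∪ W))).card < 3) : Disjoint Q U := by
  refine disjoint_left.2 fun u huQ hu => ?_
  have hsub : Q ⊆ Q ∩ U ∪ Q ∩ (T \ (U ∪ W)) := by
    intro v hv
    have hvT := mem_sdiff.1 (h.closedNbhd_U u hu (subset_closedNbhd_of_isClique hQ.isClique huQ hv))
    rw [← inter_union_distrib_left, mem_inter, mem_union, mem_sdiff, mem_union]
    tauto
  have hcard := (card_le_card hsub).trans (card_union_le _ _)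
  rw [hQ.card_eq] at hcard
  omega

theorem disjoint_sdiff_of_card_inter_lt (h : IsAlmostSevenClique F T U W)
    (hdeg : ∀ v, F.degree v ≤ 7) (hQ : F.IsNClique 4 Q) (hU : Disjoint Q U) (hW : Disjoint Q W)
    (hY : (Q ∩ (T \ (U ∪ W))).card < 3) : Disjoint Q (T \ (U ∪ W)) := by
  refine disjoint_left.2 fun y hyQ hy => ?_
  have hsub : Q ⊆ Q ∩ (T \ (U ∪ W)) ∪ closedNbhd F y \ T := by
    intro v hv
    have hvy := subset_closedNbhd_of_isClique hQ.isClique hyQ hv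
    have hvU := disjoint_left.1 hU hv
    have hvW := disjoint_left.1 hW hv
    simp only [mem_union, mem_inter, mem_sdiff]
    tauto
  have hcard := (card_le_card hsub).trans (card_union_le _ _)
  have hdegy := hdeg y
  rw [card_sdiff_of_subset (h.subset_closedNbhd y hy), card_closedNbhd, h.card_T,
    hQ.card_eq] at hcard
  omega

theorem isCliqueFreeColoring_of_ne (h : IsAlmostSevenClique F T U W) (hdeg : ∀ v, F.degree v ≤ 7)
    (hc : IsCliqueFreeColoring F 4 c) (hout : ∀ v, v ∉ T → c' v = c v)
    (hU : ∃ a ∈ U, ∃ b ∈ U, c' a ≠ c' b) (hW : ∃ a ∈ W, ∃ b ∈ W, c' a ≠ c' b)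
    (hY : ∃ a ∈ T \ (U ∪ W), ∃ b ∈ T \ (U ∪ W), c' a ≠ c' b) : IsCliqueFreeColoring F 4 c' := by
  refine isCliqueFreeColoring_iff.2 fun Q κ hQ hκ => ?_
  have hlt : ∀ {Z : Finset V}, (∃ a ∈ Z, ∃ b ∈ Z, c' a ≠ c' b) → (Q ∩ Z).card < Z.card :=
    fun ⟨_, ha, _, hb, hab⟩ => card_inter_lt_card_of_ne hκ ha hb hab
  have hQY := h.card_sdiff ▸ hlt hY
  have hQU := h.disjoint_of_card_inter_lt hQ (h.card_U ▸ hlt hU) hQY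
  have hQW := h.symm.disjoint_of_card_inter_lt hQ (h.card_W ▸ hlt hW) (union_comm U W ▸ hQY)
  have hQY := h.disjoint_sdiff_of_card_inter_lt hdeg hQ hQU hQW hQY
  obtain ⟨v, hv, hne⟩ := hc.exists_ne hQ κ
  refine hne ((hout v fun hvT => ?_).symm.trans (hκ v hv))
  exact disjoint_left.1 hQY hv (mem_sdiff.2 ⟨hvT, fun hvUW => (mem_union.1 hvUW).elim
    (disjoint_left.1 hQU hv) (disjoint_left.1 hQW hv)⟩)

theorem exists_coloring_ne (h : IsAlmostSevenClique F T U W) (hdeg : ∀ v, F.degree v ≤ 7)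
    (hc : IsCliqueFreeColoring F 4 c) :
    ∃ c' : V → Bool, IsCliqueFreeColoring F 4 c' ∧ ∃ a ∈ U, ∃ b ∈ U, c' a ≠ c' b := by
  obtain ⟨u, hu, u', hu', huu⟩ := one_lt_card.1 (h.card_U ▸ one_lt_two)
  obtain ⟨w, hw, w', hw', hww⟩ := one_lt_card.1 (h.card_W ▸ one_lt_two)
  obtain ⟨y, hy, y', hy', hyy⟩ := one_lt_card.1 (by rw [h.card_sdiff]; norm_num :
    1 < (T \ (U ∪ W)).card)
  have hUW := disjoint_left.1 h.disjoint_UW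
  rw [mem_sdiff, mem_union, not_or] at hy hy'
  have hne : ∀ {v v'}, v ∈ T → v' ∈ T → v ∈ ({u, w, y} : Finset V) →
      v' ∉ ({u, w, y} : Finset V) →
      (if v ∈ T then decide (v ∈ ({u, w, y} : Finset V)) else c v) ≠
        if v' ∈ T then decide (v' ∈ ({u, w, y} : Finset V)) else c v' := by
    intro v v' hv hv' hmem hnotMem
    simp [hv, hv', hmem, hnotMem]
  have hUne := hne (h.subset_U hu) (h.subset_U hu') (by simp) (by grind)
  refine ⟨fun v => if v ∈ T then decide (v ∈ ({u, w, y} : Finset V)) else c v,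
    h.isCliqueFreeColoring_of_ne hdeg hc (fun v hv => if_neg hv) ⟨u, hu, u', hu', hUne⟩
      ⟨w, hw, w', hw', hne (h.subset_W hw) (h.subset_W hw') (by simp) (by grind)⟩
      ⟨y, by grind, y', by grind, hne hy.1 hy'.1 (by simp) (by grind)⟩, u, hu, u', hu', hUne⟩

end IsAlmostSevenClique

end AlmostSevenClique

section JoinGraph

variable {V : Type*} {G : SimpleGraph V} {M A B D U W T : Finset V} {c : V → Bool}
  {u v : V}

/-- The graph obtained from `G` by deleting `M` and joining every vertex of `U` to every vertex of
`W`. A two-colouring of it is not constant on `U ∪ W` when this set has become a four-clique. -/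
def joinGraph (G : SimpleGraph V) (M U W : Finset V) : SimpleGraph V :=
  deleteVerts G M ⊔ (⊤ : SimpleGraph V).between U W

theorem joinGraph_comm : joinGraph G M U W = joinGraph G M W U := by
  rw [joinGraph, joinGraph, SimpleGraph.between_comm]

theorem joinGraph_adj : (joinGraph G M U W).Adj u v ↔
    (deleteVerts G M).Adj u v ∨ u ≠ v ∧ (u ∈ U ∧ v ∈ W ∨ u ∈ W ∧ v ∈ U) := by
  simp [joinGraph, SimpleGraph.between_adj]

theorem deleteVerts_adj_of_joinGraph_adj (hu : u ∉ U ∪ W) (h : (joinGraph G M U W).Adj u v) :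
    (deleteVerts G M).Adj u v := by
  rw [mem_union, not_or] at hu
  exact (joinGraph_adj.1 h).resolve_right fun h' =>
    h'.2.elim (fun huv => hu.1 huv.1) fun huv => hu.2 huv.1

variable [Fintype V]

theorem exists_mem_of_isNClique_joinGraph (hG : DegreeCliqueBound G 6)
    (hT : (joinGraph G M U W).IsNClique 7 T) : ∃ u ∈ U, u ∈ T := by
  by_contra! hUT
  refine absurd (hG.card_le (Q := T) fun x hx y hy hxy => ?_) (by rw [hT.card_eq]; norm_num)
  obtain hadj | ⟨-, ⟨hxU, -⟩ | ⟨-, hyU⟩⟩ := joinGraph_adj.1 (hT.isClique hx hy hxy)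
  exacts [hadj.1, absurd hx (hUT x hxU), absurd hy (hUT y hyU)]

namespace SixCliqueConfig

theorem subset_left (h : SixCliqueConfig G M A B D U W) : A ⊆ M :=
  h.eq_union ▸ subset_union_left.trans subset_union_left

theorem disjoint_AD (h : SixCliqueConfig G M A B D U W) : Disjoint A D := by
  have hle := card_union_le (A ∪ D) B
  have hcard := card_union_add_card_inter A D
  rw [union_right_comm, ← h.eq_union, h.isNClique.card_eq, h.card_B] at hle
  rw [h.card_A, h.card_D] at hcard
  exact disjoint_iff_inter_eq_empty.2 (card_eq_zero.1 (by omega))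

theorem adj_of_mem (h : SixCliqueConfig G M A B D U W) {a : V} (ha : a ∈ A) (hu : u ∈ U) :
    G.Adj u a :=
  (mem_outerNbhd.1 ((h.outerNbhd_A a ha).symm ▸ hu)).1.symm

theorem exists_mem_A (h : SixCliqueConfig G M A B D U W) : ∃ a, a ∈ A :=
  card_pos.1 (h.card_A ▸ two_pos)

theorem notMem_of_mem (h : SixCliqueConfig G M A B D U W) (hu : u ∈ U) : u ∉ M := by
  obtain ⟨a, ha⟩ := h.exists_mem_A
  exact (mem_outerNbhd.1 ((h.outerNbhd_A a ha).symm ▸ hu)).2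

theorem support_joinGraph_subset (h : SixCliqueConfig G M A B D U W) :
    (joinGraph G M U W).support ⊆ G.support \ M := by
  obtain ⟨a, ha⟩ := h.exists_mem_A
  obtain ⟨b, hb⟩ := h.symm.exists_mem_A
  rintro u ⟨v, huv⟩
  obtain ⟨hadj, huM, -⟩ | ⟨-, ⟨hu, -⟩ | ⟨hu, -⟩⟩ := joinGraph_adj.1 huv
  · exact ⟨⟨v, hadj⟩, huM⟩
  · exact ⟨⟨a, h.adj_of_mem ha hu⟩, h.notMem_of_mem hu⟩
  · exact ⟨⟨b, h.symm.adj_of_mem hb hu⟩, h.symm.notMem_of_mem hu⟩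

theorem ncard_support_lt (h : SixCliqueConfig G M A B D U W) {G' : SimpleGraph V}
    (hle : G' ≤ joinGraph G M U W) : G'.support.ncard < G.support.ncard := by
  obtain ⟨a, ha⟩ := h.exists_mem_A
  obtain ⟨u, hu⟩ := card_pos.1 (h.isNClique_U.card_eq ▸ two_pos)
  have hsub := (SimpleGraph.support_mono hle).trans h.support_joinGraph_subset
  refine Set.ncard_lt_ncard ⟨hsub.trans Set.sdiff_subset, fun hG => ?_⟩
  exact (hsub (hG ⟨u, (h.adj_of_mem ha hu).symm⟩)).2 (h.subset_left ha)

theorem isNClique_joinGraph (h : SixCliqueConfig G M A B D U W) :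
    (joinGraph G M U W).IsNClique 4 (U ∪ W) := by
  refine ⟨fun u hu v hv huv => joinGraph_adj.2 ?_, ?_⟩
  · rw [mem_coe, mem_union] at hu hv
    obtain hu | hu := hu <;> obtain hv | hv := hv
    · exact .inl ⟨h.isNClique_U.isClique hu hv huv, h.notMem_of_mem hu, h.notMem_of_mem hv⟩
    · exact .inr ⟨huv, .inl ⟨hu, hv⟩⟩
    · exact .inr ⟨huv, .inr ⟨hu, hv⟩⟩
    · exact .inl ⟨h.isNClique_W.isClique hu hv huv, h.symm.notMem_of_mem hu,
        h.symm.notMem_of_mem hv⟩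
  · rw [card_union_of_disjoint h.disjoint_UW, h.isNClique_U.card_eq, h.isNClique_W.card_eq]

theorem neighborFinset_joinGraph_subset (h : SixCliqueConfig G M A B D U W) (hu : u ∈ U) :
    (joinGraph G M U W).neighborFinset u ⊆ outerNbhd G M u ∪ W := by
  intro v hv
  rw [SimpleGraph.mem_neighborFinset] at hv
  obtain ⟨hadj, -, hvM⟩ | ⟨-, ⟨-, hv⟩ | ⟨huW, -⟩⟩ := joinGraph_adj.1 hv
  · exact mem_union_left _ (mem_outerNbhd.2 ⟨hadj, hvM⟩)
  · exact mem_union_right _ hv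
  · exact absurd huW (disjoint_left.1 h.disjoint_UW hu)

theorem card_outerNbhd_add_card_filter_le (h : SixCliqueConfig G M A B D U W)
    (hG : DegreeCliqueBound G 6) (hu : u ∈ U) :
    (outerNbhd G M u).card + #{d ∈ D | outerNbhd G M d = U} ≤ 5 := by
  have hle := card_outerNbhd_add_card_le (G := G) (M := M) (v := u)
    (A := A ∪ {d ∈ D | outerNbhd G M d = U})
    (union_subset h.subset_left ((filter_subset _ _).trans (h.eq_union ▸ subset_union_right)))
    fun x hx => by
      obtain hx | hx := mem_union.1 hx
      · exact h.adj_of_mem hx hu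
      · exact (mem_outerNbhd.1 ((mem_filter.1 hx).2.symm ▸ hu)).1.symm
  rw [card_union_of_disjoint (h.disjoint_AD.mono_right (filter_subset _ _)), h.card_A] at hle
  have := hG.degree_le u
  omega

theorem degree_joinGraph_le (h : SixCliqueConfig G M A B D U W) (hG : DegreeCliqueBound G 6)
    (v : V) : (joinGraph G M U W).degree v ≤ 7 := by
  have hside : ∀ {A B U W : Finset V}, SixCliqueConfig G M A B D U W → v ∈ U →
      (joinGraph G M U W).degree v ≤ 7 := by
    intro A B U W h hv
    have hcard := (card_le_card (h.neighborFinset_joinGraph_subset hv)).trans (card_union_le _ _)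
    have := h.card_outerNbhd_add_card_filter_le hG hv
    rw [SimpleGraph.card_neighborFinset_eq_degree, h.isNClique_W.card_eq] at hcard
    omega
  by_cases hv : v ∈ U ∪ W
  · obtain hv | hv := mem_union.1 hv
    · exact hside h hv
    · exact joinGraph_comm (U := U) ▸ hside h.symm hv
  · refine le_trans ?_ (hG.degree_le v)
    rw [← SimpleGraph.card_neighborFinset_eq_degree, ← SimpleGraph.card_neighborFinset_eq_degree]
    refine card_le_card fun w hw => ?_
    rw [SimpleGraph.mem_neighborFinset] at hw ⊢
    exact (deleteVerts_adj_of_joinGraph_adj hv hw).1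

theorem subset_insert_of_isNClique_joinGraph (h : SixCliqueConfig G M A B D U W)
    (hT : (joinGraph G M U W).IsNClique 7 T) (hu : u ∈ U) (huT : u ∈ T) :
    T ⊆ insert u (outerNbhd G M u ∪ W) :=
  (subset_closedNbhd_of_isClique hT.isClique huT).trans
    (insert_subset_insert u (h.neighborFinset_joinGraph_subset hu))

theorem card_filter_le_one (h : SixCliqueConfig G M A B D U W) (hG : DegreeCliqueBound G 6)
    (hT : (joinGraph G M U W).IsNClique 7 T) : #{d ∈ D | outerNbhd G M d = U} ≤ 1 := by
  obtain ⟨u, hu, huT⟩ := exists_mem_of_isNClique_joinGraph hG hT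
  have hcard := (card_le_card (h.subset_insert_of_isNClique_joinGraph hT hu huT)).trans
    ((card_insert_le _ _).trans (Nat.succ_le_succ (card_union_le _ _)))
  have := h.card_outerNbhd_add_card_filter_le hG hu
  rw [hT.card_eq, h.isNClique_W.card_eq] at hcard
  omega

/- A vertex `u ∈ U` has at most four neighbours outside `M`, so `u`, these neighbours and `W` are
exactly the seven vertices of `T`. -/
theorem eq_insert_of_isNClique_joinGraph (h : SixCliqueConfig G M A B D U W)
    (hG : DegreeCliqueBound G 6) (hD : ∀ d ∈ D, outerNbhd G M d = U ∨ outerNbhd G M d = W)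
    (hT : (joinGraph G M U W).IsNClique 7 T) (hu : u ∈ U) (huT : u ∈ T) :
    T = insert u (outerNbhd G M u ∪ W) ∧ Disjoint (outerNbhd G M u) W := by
  have hDcard : D.card ≤ #{d ∈ D | outerNbhd G M d = U} + #{d ∈ D | outerNbhd G M d = W} := by
    refine (card_le_card fun d hd => ?_).trans (card_union_le _ _)
    rw [← filter_or]
    exact mem_filter.2 ⟨hd, hD d hd⟩
  have hDW := h.symm.card_filter_le_one hG (joinGraph_comm (U := U) ▸ hT)
  have houter := h.card_outerNbhd_add_card_filter_le hG hu
  have hsub := h.subset_insert_of_isNClique_joinGraph hT hu huT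
  have hins := card_insert_le u (outerNbhd G M u ∪ W)
  have hunion := card_union_add_card_inter (outerNbhd G M u) W
  have hcard := card_le_card hsub
  rw [h.card_D] at hDcard
  rw [hT.card_eq] at hcard
  rw [h.isNClique_W.card_eq] at hunion
  exact ⟨eq_of_subset_of_card_le hsub (by rw [hT.card_eq]; omega),
    disjoint_iff_inter_eq_empty.2 (card_eq_zero.1 (by omega))⟩

theorem isAlmostSevenClique (h : SixCliqueConfig G M A B D U W) (hG : DegreeCliqueBound G 6)
    (hD : ∀ d ∈ D, outerNbhd G M d = U ∨ outerNbhd G M d = W)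
    (hT : (joinGraph G M U W).IsNClique 7 T) :
    IsAlmostSevenClique (deleteVerts G M) T U W := by
  have hT' := joinGraph_comm (U := U) ▸ hT
  have hD' := fun d hd => (hD d hd).symm
  have hside : ∀ {A B U W : Finset V}, SixCliqueConfig G M A B D U W →
      (∀ d ∈ D, outerNbhd G M d = U ∨ outerNbhd G M d = W) →
      (joinGraph G M U W).IsNClique 7 T → W ⊆ T := by
    intro A B U W h hD hT
    obtain ⟨u, hu, huT⟩ := exists_mem_of_isNClique_joinGraph hG hT
    rw [(h.eq_insert_of_isNClique_joinGraph hG hD hT hu huT).1]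
    exact subset_union_right.trans (subset_insert _ _)
  have hnbhd : ∀ {A B U W : Finset V}, SixCliqueConfig G M A B D U W →
      (∀ d ∈ D, outerNbhd G M d = U ∨ outerNbhd G M d = W) →
      (joinGraph G M U W).IsNClique 7 T → U ⊆ T →
      ∀ u ∈ U, closedNbhd (deleteVerts G M) u ⊆ T \ W := by
    intro A B U W h hD hT hUT u hu v hv
    obtain ⟨hTeq, hdisj⟩ := h.eq_insert_of_isNClique_joinGraph hG hD hT hu (hUT hu)
    obtain rfl | hadj := mem_closedNbhd.1 hv
    · exact mem_sdiff.2 ⟨hUT hu, disjoint_left.1 h.disjoint_UW hu⟩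
    · have hv := mem_outerNbhd.2 ⟨hadj.1, hadj.2.2⟩
      exact mem_sdiff.2 ⟨hTeq ▸ mem_insert_of_mem (mem_union_left _ hv), disjoint_left.1 hdisj hv⟩
  have hUT := hside h.symm hD' hT'
  have hWT := hside h hD hT
  exact
    { card_T := hT.card_eq
      card_U := h.isNClique_U.card_eq
      card_W := h.isNClique_W.card_eq
      subset_U := hUT
      subset_W := hWT
      disjoint_UW := h.disjoint_UW
      closedNbhd_U := hnbhd h hD hT hUT
      closedNbhd_W := hnbhd h.symm hD' hT' hWT
      subset_closedNbhd := fun y hy t ht => mem_closedNbhd.2 <| or_iff_not_imp_left.2 fun hne =>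
        deleteVerts_adj_of_joinGraph_adj (mem_sdiff.1 hy).2
          (hT.isClique (mem_sdiff.1 hy).1 ht (Ne.symm hne)) }

theorem exists_coloring (h : SixCliqueConfig G M A B D U W) (hG : DegreeCliqueBound G 6)
    (ih : ∀ G' : SimpleGraph V, DegreeCliqueBound G' 6 → G'.support.ncard < G.support.ncard →
      ∃ c : V → Bool, IsCliqueFreeColoring G' 4 c) :
    ∃ c : V → Bool, IsCliqueFreeColoring G 4 c := by
  have hle : deleteVerts G M ≤ joinGraph G M U W := le_sup_left
  obtain ⟨c, hc⟩ := ih (deleteVerts G M) (hG.of_le (deleteVerts_le G M)) (h.ncard_support_lt hle)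
  by_cases hD : ∃ d ∈ D, outerNbhd G M d ≠ U ∧ outerNbhd G M d ≠ W
  · exact h.exists_coloring_of_deleteVerts hG hc (.inl hD)
  push Not at hD
  by_cases hfree : (joinGraph G M U W).CliqueFree 7
  · obtain ⟨c, hc⟩ := ih _ ⟨h.degree_joinGraph_le hG, hfree⟩ (h.ncard_support_lt le_rfl)
    refine h.exists_coloring_of_deleteVerts hG (hc.anti hle) (.inr fun κ hκ => ?_)
    obtain ⟨v, hv, hne⟩ := hc.exists_ne h.isNClique_joinGraph κ
    exact hne ((mem_union.1 hv).elim (hκ.1 v) (hκ.2 v))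
  · obtain ⟨T, hT⟩ := not_forall_not.1 hfree
    obtain ⟨c, hc, a, ha, b, hb, hab⟩ := (h.isAlmostSevenClique hG
      (fun d hd => or_iff_not_imp_left.2 (hD d hd)) hT).exists_coloring_ne
      (hG.of_le (deleteVerts_le G M)).degree_le hc
    exact h.exists_coloring_of_deleteVerts hG hc
      (.inr fun κ hκ => hab ((hκ.1 a ha).trans (hκ.1 b hb).symm))

end SixCliqueConfig

end JoinGraph

section Removal

variable {V : Type*} {G : SimpleGraph V} {e r : ℕ} {Q S : Finset V}

theorem card_le_of_cliqueFreeOn (hS : G.CliqueFreeOn S (r + 1)) (hQ : G.IsClique Q)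
    (hQS : Q ⊆ S) : Q.card ≤ r :=
  not_lt.1 fun hlt => SimpleGraph.CliqueFreeOn.mono G hlt hS (coe_subset.2 hQS) ⟨hQ, rfl⟩

variable [Fintype V]

theorem exists_cliqueFreeOn_degreeCliqueBound_deleteVerts (he : 4 ≤ e)
    (hG : DegreeCliqueBound G (e + r)) :
    ∃ S : Finset V, G.CliqueFreeOn S (r + 1) ∧ DegreeCliqueBound (deleteVerts G S) e := by
  induction r generalizing G with
  | zero =>
    refine ⟨∅, fun Q hQ hQ1 => ?_, hG.of_le (deleteVerts_le G ∅)⟩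
    have hcard := card_le_card (coe_subset.1 hQ)
    rw [hQ1.card_eq, card_empty] at hcard
    omega
  | succ r ih =>
    obtain ⟨I, hI, hGI⟩ := exists_isIndepSet_degreeCliqueBound_deleteVerts (e := e + r) hG
      (by omega)
    obtain ⟨S, hS, hGS⟩ := ih hGI
    refine ⟨I ∪ S, fun Q hQ hQr => ?_, hGS.of_le fun a b h => ?_⟩
    · have hQI := card_inter_le_one hQr.isClique hI
      have hsum := card_sdiff_add_card_inter Q I
      have hle := card_le_of_cliqueFreeOn hS (Q := Q \ I)
        (isClique_deleteVerts (hQr.isClique.subset (coe_subset.2 sdiff_subset)) sdiff_disjoint)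
        (sdiff_le_iff.2 (coe_subset.1 hQ))
      rw [hQr.card_eq] at hsum
      omega
    · simp only [deleteVerts_adj, mem_union, not_or] at h ⊢
      tauto

end Removal

/-! ### Twin pairs in graphs with maximum degree five and clique number four -/

section TwinPairs

variable {V : Type*} [Fintype V] {F : SimpleGraph V} {x y z : V} {Q S₀ : Finset V}

theorem IsFull.card_cliqueClass_eq_two (hF : DegreeCliqueBound F 4) (hx : IsFull F 4 x) :
    (cliqueClass F 4 x).card = 2 := by
  have := hx.card_cliqueClass hF
  omega

theorem IsFull.cliqueClass_union_eq (hF : DegreeCliqueBound F 4) (hx : IsFull F 4 x)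
    (hy : IsFull F 4 y) (hne : cliqueClass F 4 x ≠ cliqueClass F 4 y) (hQ : F.IsNClique 4 Q)
    (hxQ : x ∈ Q) (hyQ : y ∈ Q) : cliqueClass F 4 x ∪ cliqueClass F 4 y = Q := by
  refine eq_of_subset_of_card_le
    (union_subset (cliqueClass_subset hQ hxQ) (cliqueClass_subset hQ hyQ)) ?_
  rw [card_union_of_disjoint (hx.disjoint_cliqueClass hF hy hne), hx.card_cliqueClass_eq_two hF,
    hy.card_cliqueClass_eq_two hF, hQ.card_eq]

theorem IsFull.isNClique_union (hF : DegreeCliqueBound F 4) (hx : IsFull F 4 x)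
    (hy : IsFull F 4 y) (hne : cliqueClass F 4 x ≠ cliqueClass F 4 y) (hxy : F.Adj x y) :
    F.IsNClique 4 (cliqueClass F 4 x ∪ cliqueClass F 4 y) := by
  obtain ⟨Q, hQ, hxQ, hyQ⟩ := hx.exists_isNClique_of_adj hF hxy
  rwa [hx.cliqueClass_union_eq hF hy hne hQ hxQ hyQ]

theorem IsFull.union_subset_closedNbhd (hF : DegreeCliqueBound F 4) (hx : IsFull F 4 x)
    (hy : IsFull F 4 y) (hne : cliqueClass F 4 x ≠ cliqueClass F 4 y) (hxy : F.Adj x y) :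
    cliqueClass F 4 x ∪ cliqueClass F 4 y ⊆ closedNbhd F x :=
  subset_closedNbhd_of_isClique (hx.isNClique_union hF hy hne hxy).isClique
    (mem_union_left _ (self_mem_cliqueClass F 4 x))

theorem IsFull.isNClique_closedNbhd_sdiff (hF : DegreeCliqueBound F 4) (hx : IsFull F 4 x)
    (hy : IsFull F 4 y) (hne : cliqueClass F 4 x ≠ cliqueClass F 4 y) (hxy : F.Adj x y) :
    F.IsNClique 2 (closedNbhd F x \ (cliqueClass F 4 x ∪ cliqueClass F 4 y)) := by
  refine ⟨?_, ?_⟩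
  · obtain ⟨Q, R, h⟩ := id hx
    have hxQR := mem_inter.1 h.mem
    have hyQR : y ∈ Q ∪ R := h.union_eq hF ▸ mem_closedNbhd.2 (.inr hxy)
    rw [← h.union_eq hF]
    obtain hyQ | hyR := mem_union.1 hyQR
    · rw [hx.cliqueClass_union_eq hF hy hne h.left hxQR.1 hyQ]
      exact h.right.isClique.subset (coe_subset.2 (by grind))
    · rw [hx.cliqueClass_union_eq hF hy hne h.right hxQR.2 hyR]
      exact h.left.isClique.subset (coe_subset.2 (by grind))
  · rw [card_sdiff_of_subset (hx.union_subset_closedNbhd hF hy hne hxy), hx.card_closedNbhd hF,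
      (hx.isNClique_union hF hy hne hxy).card_eq]

/-- An inner vertex: all vertices of its closed neighbourhood are full. -/
def IsInner (F : SimpleGraph V) (x : V) : Prop :=
  ∀ y ∈ closedNbhd F x, IsFull F 4 y

theorem exists_isIndepSet_dominating_isInner (F : SimpleGraph V) :
    ∃ S₀ : Finset V, F.IsIndepSet S₀ ∧ (∀ s ∈ S₀, IsInner F s) ∧
      ∀ x, IsInner F x → ∃ s ∈ S₀, s ∈ closedNbhd F x := by
  obtain ⟨S₀, hS₀, -, hinner, hdom⟩ := exists_dominating_isIndepSet (G := F) (S := ∅)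
    (A := {x | IsInner F x}) (by simp) (empty_subset _)
  refine ⟨S₀, hS₀, fun s hs => (mem_filter_univ _).1 (hinner hs), fun x hx => ?_⟩
  by_cases hxS : x ∈ S₀
  · exact ⟨x, hxS, self_mem_closedNbhd F x⟩
  · obtain ⟨s, hs, hxs⟩ := hdom x ((mem_filter_univ _).2 hx) hxS
    exact ⟨s, hs, mem_closedNbhd.2 (.inr hxs)⟩

/-- A full vertex whose class is not met by `S₀`. -/
structure IsUnhit (F : SimpleGraph V) (S₀ : Finset V) (x : V) : Prop where
  isFull : IsFull F 4 x
  disjoint : Disjoint (cliqueClass F 4 x) S₀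

theorem IsUnhit.of_mem_cliqueClass (hF : DegreeCliqueBound F 4) (hx : IsUnhit F S₀ x)
    (hy : y ∈ cliqueClass F 4 x) : IsUnhit F S₀ y :=
  ⟨hx.isFull.of_mem_cliqueClass hF hy, hx.isFull.cliqueClass_eq_of_mem hF hy ▸ hx.disjoint⟩

/- Otherwise the classes of `x`, `y` and `z` fill the closed neighbourhood of `x`, so `x` is inner
and `S₀` meets one of them. -/
theorem IsUnhit.cliqueClass_eq_of_adj (hF : DegreeCliqueBound F 4)
    (hS₀ : ∀ x, IsInner F x → ∃ s ∈ S₀, s ∈ closedNbhd F x) (hx : IsUnhit F S₀ x)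
    (hy : IsUnhit F S₀ y) (hz : IsUnhit F S₀ z) (hxy : F.Adj x y) (hxz : F.Adj x z)
    (hy_ne : cliqueClass F 4 x ≠ cliqueClass F 4 y)
    (hz_ne : cliqueClass F 4 x ≠ cliqueClass F 4 z) : cliqueClass F 4 y = cliqueClass F 4 z := by
  by_contra hne
  have hfill : cliqueClass F 4 x ∪ cliqueClass F 4 y ∪ cliqueClass F 4 z = closedNbhd F x := by
    refine eq_of_subset_of_card_le
      (union_subset (hx.isFull.union_subset_closedNbhd hF hy.isFull hy_ne hxy)
        (subset_union_right.trans (hx.isFull.union_subset_closedNbhd hF hz.isFull hz_ne hxz))) ?_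
    rw [hx.isFull.card_closedNbhd hF, card_union_of_disjoint (disjoint_union_left.2
      ⟨hx.isFull.disjoint_cliqueClass hF hz.isFull hz_ne,
        hy.isFull.disjoint_cliqueClass hF hz.isFull hne⟩),
      (hx.isFull.isNClique_union hF hy.isFull hy_ne hxy).card_eq,
      hz.isFull.card_cliqueClass_eq_two hF]
  have hunhit : ∀ w ∈ closedNbhd F x, IsUnhit F S₀ w := by
    intro w hw
    rw [← hfill, mem_union, mem_union] at hw
    obtain (hw | hw) | hw := hw
    exacts [hx.of_mem_cliqueClass hF hw, hy.of_mem_cliqueClass hF hw, hz.of_mem_cliqueClass hF hw]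
  obtain ⟨s, hs, hsx⟩ := hS₀ x fun w hw => (hunhit w hw).isFull
  exact disjoint_left.1 (hunhit s hsx).disjoint (self_mem_cliqueClass F 4 s) hs

end TwinPairs

/-! ### Conflict-free transversals of the unhit classes -/

section PairwiseTransversal

variable {V α : Type*} {f : V → α} {B : V → V → Prop} {R : Finset V}

/- The blocked class and the class of its blocker `s` are represented afresh, without conflict, by
`hfour`; by `hone` the new representatives do not conflict with the remaining members. -/
theorem exists_pairwise_card_lt_of_blocked (hB : ∀ ⦃a b⦄, B a b → B b a)
    (hone : ∀ ⦃x x' y z⦄, x ∈ R → x' ∈ R → y ∈ R → z ∈ R → f x' = f x → f x ≠ f y → f x ≠ f z →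
      B x y → B x' z → f y = f z)
    (hfour : ∀ ⦃x y⦄, x ∈ R → y ∈ R → f x ≠ f y →
      ∃ x' ∈ R, ∃ y' ∈ R, f x' = f x ∧ f y' = f y ∧ ¬ B x' y')
    {S : Finset V} (hSR : S ⊆ R) (hpair : (S : Set V).Pairwise fun a b => f a ≠ f b ∧ ¬ B a b)
    {x s : V} (hx : x ∈ R) (hs : s ∈ S) (hunhit : ∀ t ∈ S, f t ≠ f x) (hxs : B x s) :
    ∃ T ⊆ R, (T : Set V).Pairwise (fun a b => f a ≠ f b ∧ ¬ B a b) ∧ S.card < T.card := by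
  have hsymm : Std.Symm fun a b => f a ≠ f b ∧ ¬ B a b :=
    ⟨fun _ _ h => ⟨h.1.symm, mt (@hB _ _) h.2⟩⟩
  obtain ⟨x', hx', s', hs', hfx, hfs, hx's'⟩ := hfour hx (hSR hs) (hunhit s hs).symm
  have hs't : ∀ t ∈ S.erase s, f s' ≠ f t ∧ ¬ B s' t := by
    intro t ht
    obtain ⟨hts, ht⟩ := mem_erase.1 ht
    have hst := (hpair hs ht hts.symm).1
    exact ⟨hfs ▸ hst, fun hconf => hunhit t ht (hone (hSR hs) hs' hx (hSR ht) hfs (hunhit s hs) hst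
      (hB hxs) hconf).symm⟩
  have hx't : ∀ t ∈ insert s' (S.erase s), f x' ≠ f t ∧ ¬ B x' t := by
    intro t ht
    obtain rfl | ht := mem_insert.1 ht
    · exact ⟨hfx ▸ hfs ▸ (hunhit s hs).symm, hx's'⟩
    · obtain ⟨hts, ht⟩ := mem_erase.1 ht
      exact ⟨hfx ▸ (hunhit t ht).symm, fun hconf => (hpair hs ht hts.symm).1
        (hone hx hx' (hSR hs) (hSR ht) hfx (hunhit s hs).symm (hunhit t ht).symm hxs hconf)⟩
  refine ⟨insert x' (insert s' (S.erase s)),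
    insert_subset hx' (insert_subset hs' ((erase_subset s S).trans hSR)), ?_, ?_⟩
  · rw [coe_insert, Set.pairwise_insert_of_symm, coe_insert, Set.pairwise_insert_of_symm]
    exact ⟨⟨hpair.mono (coe_subset.2 (erase_subset s S)), fun t ht _ => hs't t ht⟩,
      fun t ht _ => hx't t (mod_cast ht)⟩
  · rw [card_insert_of_notMem fun hmem => (hx't x' hmem).1 rfl,
      card_insert_of_notMem fun hmem => (hs't s' hmem).1 rfl, card_erase_add_one hs]
    exact Nat.lt_succ_self _

theorem exists_pairwise_transversal (hB : ∀ ⦃a b⦄, B a b → B b a)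
    (hone : ∀ ⦃x x' y z⦄, x ∈ R → x' ∈ R → y ∈ R → z ∈ R → f x' = f x → f x ≠ f y → f x ≠ f z →
      B x y → B x' z → f y = f z)
    (hfour : ∀ ⦃x y⦄, x ∈ R → y ∈ R → f x ≠ f y →
      ∃ x' ∈ R, ∃ y' ∈ R, f x' = f x ∧ f y' = f y ∧ ¬ B x' y') :
    ∃ S ⊆ R, (S : Set V).Pairwise (fun a b => f a ≠ f b ∧ ¬ B a b) ∧
      ∀ x ∈ R, ∃ s ∈ S, f s = f x := by
  have hsymm : Std.Symm fun a b => f a ≠ f b ∧ ¬ B a b :=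
    ⟨fun _ _ h => ⟨h.1.symm, mt (@hB _ _) h.2⟩⟩
  obtain ⟨S, hS, hmax⟩ := exists_max_image
    (R.powerset.filter fun S : Finset V => (S : Set V).Pairwise fun a b => f a ≠ f b ∧ ¬ B a b) card
    ⟨∅, by simp⟩
  simp only [mem_filter, mem_powerset, and_imp] at hS hmax
  obtain ⟨hSR, hpair⟩ := hS
  refine ⟨S, hSR, hpair, fun x hx => by_contra fun hunhit => ?_⟩
  push Not at hunhit
  by_cases hblocked : ∃ s ∈ S, B x s
  · obtain ⟨s, hs, hxs⟩ := hblocked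
    obtain ⟨T, hTR, hT, hlt⟩ :=
      exists_pairwise_card_lt_of_blocked hB hone hfour hSR hpair hx hs hunhit hxs
    exact (hmax T hTR hT).not_gt hlt
  · push Not at hblocked
    have hle := hmax (insert x S) (insert_subset hx hSR) (by
      rw [coe_insert, Set.pairwise_insert_of_symm]
      exact ⟨hpair, fun t ht _ => ⟨(hunhit t ht).symm, hblocked t ht⟩⟩)
    rw [card_insert_of_notMem fun hxS => hunhit x hxS rfl] at hle
    omega

end PairwiseTransversal

section Conflicts

variable {V : Type*} [Fintype V] {G F : SimpleGraph V} {S₀ : Finset V} {a b x y z u : V}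

/-- The neighbours that `v` loses in passing from `G` to its subgraph `F`. -/
noncomputable def lostNbhd (G F : SimpleGraph V) (v : V) : Finset V :=
  G.neighborFinset v \ F.neighborFinset v

theorem mem_lostNbhd : u ∈ lostNbhd G F x ↔ G.Adj x u ∧ ¬ F.Adj x u := by
  rw [lostNbhd, mem_sdiff, SimpleGraph.mem_neighborFinset, SimpleGraph.mem_neighborFinset]

theorem card_lostNbhd_le (hG : DegreeCliqueBound G 6) (hF : DegreeCliqueBound F 4)
    (hle : F ≤ G) (hx : IsFull F 4 x) : (lostNbhd G F x).card ≤ 2 := by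
  have hsub : F.neighborFinset x ⊆ G.neighborFinset x :=
    Set.toFinset_mono (SimpleGraph.neighborSet_mono hle x)
  have hdeg := hx.card_closedNbhd hF
  have hGdeg := hG.degree_le x
  rw [card_closedNbhd] at hdeg
  rw [lostNbhd, card_sdiff_of_subset hsub,
    SimpleGraph.card_neighborFinset_eq_degree, SimpleGraph.card_neighborFinset_eq_degree]
  omega

/-- The vertices `a` and `b` are adjacent in `F` and lose the same edge of `G`, so that the four
vertices form a clique of `G`. -/
structure IsConflict (G F : SimpleGraph V) (a b : V) : Prop where
  adj : F.Adj a b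
  lostNbhd_eq : lostNbhd G F a = lostNbhd G F b
  isNClique : G.IsNClique 2 (lostNbhd G F a)

theorem IsConflict.symm (h : IsConflict G F a b) : IsConflict G F b a :=
  ⟨h.adj.symm, h.lostNbhd_eq.symm, h.lostNbhd_eq ▸ h.isNClique⟩

theorem IsFull.disjoint_closedNbhd_sdiff (hF : DegreeCliqueBound F 4) (hx : IsFull F 4 x)
    (hy : IsFull F 4 y) (hne : cliqueClass F 4 x ≠ cliqueClass F 4 y) (hxy : F.Adj x y) :
    Disjoint (closedNbhd F x \ (cliqueClass F 4 x ∪ cliqueClass F 4 y))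
      (closedNbhd F y \ (cliqueClass F 4 x ∪ cliqueClass F 4 y)) := by
  refine disjoint_left.2 fun w hwx hwy => ?_
  have hC := hx.isNClique_union hF hy hne hxy
  rw [mem_sdiff] at hwx hwy
  have hadj : ∀ v ∈ cliqueClass F 4 x ∪ cliqueClass F 4 y, w ∈ closedNbhd F v := by
    intro v hv
    obtain hv | hv := mem_union.1 hv
    · exact hx.closedNbhd_eq_of_mem hF hv ▸ hwx.1
    · exact hy.closedNbhd_eq_of_mem hF hv ▸ hwy.1
  have hle := hF.card_le (isClique_insert_of_subset_closedNbhd hC.isClique (x := w) fun v hv =>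
    mem_closedNbhd.2 ((mem_closedNbhd.1 (hadj v hv)).imp Eq.symm SimpleGraph.Adj.symm))
  rw [card_insert_of_notMem hwx.2, hC.card_eq] at hle
  omega

theorem outerNbhd_union_eq_closedNbhd_sdiff {C D : Finset V} (hle : F ≤ G) (hz : z ∈ C)
    (hD : lostNbhd G F z = D) : outerNbhd G (C ∪ D) z = closedNbhd F z \ C := by
  ext u
  rw [mem_outerNbhd, mem_sdiff, mem_closedNbhd, ← hD, mem_union, mem_lostNbhd]
  have := @hle z u
  grind

theorem isNClique_union_lostNbhd {C D : Finset V} {m n : ℕ} (hle : F ≤ G) (hC : F.IsNClique m C)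
    (hD : G.IsNClique n D) (hCD : ∀ z ∈ C, lostNbhd G F z = D) :
    G.IsNClique (m + n) (C ∪ D) := by
  have hcross : ∀ z ∈ C, ∀ d ∈ D, G.Adj z d ∧ ¬ F.Adj z d := fun z hz d hd =>
    mem_lostNbhd.1 (hCD z hz ▸ hd)
  have hdisj : Disjoint C D := by
    refine disjoint_left.2 fun d hdC hdD => (hcross d hdC d hdD).1.ne rfl
  refine ⟨?_, by rw [card_union_of_disjoint hdisj, hC.card_eq, hD.card_eq]⟩
  rw [coe_union, SimpleGraph.isClique_iff, Set.pairwise_union]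
  exact ⟨hC.isClique.mono hle, hD.isClique, fun z hz d hd _ =>
    ⟨(hcross z hz d hd).1, (hcross z hz d hd).1.symm⟩⟩

theorem sixCliqueConfig_of_isConflict (hF : DegreeCliqueBound F 4) (hle : F ≤ G)
    (hx : IsFull F 4 x) (hy : IsFull F 4 y) (hne : cliqueClass F 4 x ≠ cliqueClass F 4 y)
    (hconf : ∀ a ∈ cliqueClass F 4 x, ∀ b ∈ cliqueClass F 4 y, IsConflict G F a b) :
    SixCliqueConfig G (cliqueClass F 4 x ∪ cliqueClass F 4 y ∪ lostNbhd G F x)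
      (cliqueClass F 4 x) (cliqueClass F 4 y) (lostNbhd G F x)
      (closedNbhd F x \ (cliqueClass F 4 x ∪ cliqueClass F 4 y))
      (closedNbhd F y \ (cliqueClass F 4 x ∪ cliqueClass F 4 y)) := by
  have hxmem := self_mem_cliqueClass F 4 x
  have hymem := self_mem_cliqueClass F 4 y
  have hxy := hconf x hxmem y hymem
  have hlost : ∀ z ∈ cliqueClass F 4 x ∪ cliqueClass F 4 y, lostNbhd G F z = lostNbhd G F x := by
    intro z hz
    obtain hz | hz := mem_union.1 hz
    · exact (hconf z hz y hymem).lostNbhd_eq.trans hxy.lostNbhd_eq.symm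
    · exact (hconf x hxmem z hz).lostNbhd_eq.symm
  have hC := hx.isNClique_union hF hy hne hxy.adj
  have hW := hy.isNClique_closedNbhd_sdiff hF hx hne.symm hxy.adj.symm
  rw [union_comm] at hW
  exact
    { isNClique := isNClique_union_lostNbhd hle hC hxy.isNClique hlost
      eq_union := rfl
      card_A := hx.card_cliqueClass_eq_two hF
      card_B := hy.card_cliqueClass_eq_two hF
      card_D := hxy.isNClique.card_eq
      outerNbhd_A := fun a ha => by
        have haC := mem_union_left (cliqueClass F 4 y) ha
        rw [outerNbhd_union_eq_closedNbhd_sdiff hle haC (hlost a haC),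
          hx.closedNbhd_eq_of_mem hF ha]
      outerNbhd_B := fun b hb => by
        have hbC := mem_union_right (cliqueClass F 4 x) hb
        rw [outerNbhd_union_eq_closedNbhd_sdiff hle hbC (hlost b hbC),
          hy.closedNbhd_eq_of_mem hF hb]
      isNClique_U := (hx.isNClique_closedNbhd_sdiff hF hy hne hxy.adj).mono hle
      isNClique_W := hW.mono hle
      disjoint_UW := hx.disjoint_closedNbhd_sdiff hF hy hne hxy.adj }

theorem IsConflict.cliqueClass_eq {x' : V} (hF : DegreeCliqueBound F 4)
    (hS₀ : ∀ x, IsInner F x → ∃ s ∈ S₀, s ∈ closedNbhd F x) (hx : IsUnhit F S₀ x)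
    (hy : IsUnhit F S₀ y) (hz : IsUnhit F S₀ z) (hx' : cliqueClass F 4 x' = cliqueClass F 4 x)
    (hy_ne : cliqueClass F 4 x ≠ cliqueClass F 4 y)
    (hz_ne : cliqueClass F 4 x ≠ cliqueClass F 4 z) (hxy : IsConflict G F x y)
    (hxz : IsConflict G F x' z) : cliqueClass F 4 y = cliqueClass F 4 z := by
  have hx'x : x' ∈ cliqueClass F 4 x := hx' ▸ self_mem_cliqueClass F 4 x'
  have hzx : z ≠ x := fun h => hz_ne (h ▸ rfl)
  exact hx.cliqueClass_eq_of_adj hF hS₀ hy hz hxy.adj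
    (adj_of_closedNbhd_eq (hx.isFull.closedNbhd_eq_of_mem hF hx'x) hxz.adj hzx) hy_ne hz_ne

/-- A system `S` of representatives of the unhit classes without conflicts. -/
structure IsConflictFreeTransversal (G F : SimpleGraph V) (S₀ S : Finset V) : Prop where
  isUnhit : ∀ s ∈ S, IsUnhit F S₀ s
  pairwise : (S : Set V).Pairwise fun a b =>
    cliqueClass F 4 a ≠ cliqueClass F 4 b ∧ ¬ IsConflict G F a b
  exists_mem : ∀ x, IsUnhit F S₀ x → ∃ s ∈ S, s ∈ cliqueClass F 4 x

theorem exists_isConflictFreeTransversal (hG : DegreeCliqueBound G 6)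
    (hF : DegreeCliqueBound F 4) (hle : F ≤ G)
    (ih : ∀ G' : SimpleGraph V, DegreeCliqueBound G' 6 → G'.support.ncard < G.support.ncard →
      ∃ c : V → Bool, IsCliqueFreeColoring G' 4 c)
    (hcol : ¬ ∃ c : V → Bool, IsCliqueFreeColoring G 4 c)
    (hS₀ : ∀ x, IsInner F x → ∃ s ∈ S₀, s ∈ closedNbhd F x) :
    ∃ S, IsConflictFreeTransversal G F S₀ S := by
  have hfour : ∀ ⦃x y⦄, IsUnhit F S₀ x → IsUnhit F S₀ y → cliqueClass F 4 x ≠ cliqueClass F 4 y →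
      ∃ x', IsUnhit F S₀ x' ∧ ∃ y', IsUnhit F S₀ y' ∧ cliqueClass F 4 x' = cliqueClass F 4 x ∧
        cliqueClass F 4 y' = cliqueClass F 4 y ∧ ¬ IsConflict G F x' y' := by
    intro x y hx hy hne
    by_contra! hcon
    refine hcol ((sixCliqueConfig_of_isConflict hF hle hx.isFull hy.isFull hne
      fun a ha b hb => ?_).exists_coloring hG ih)
    exact hcon a (hx.of_mem_cliqueClass hF ha) b (hy.of_mem_cliqueClass hF hb)
      (hx.isFull.cliqueClass_eq_of_mem hF ha) (hy.isFull.cliqueClass_eq_of_mem hF hb)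
  obtain ⟨S, hS, hpair, hhit⟩ := exists_pairwise_transversal (f := cliqueClass F 4)
    (B := IsConflict G F) (R := {x | IsUnhit F S₀ x}) (fun _ _ => IsConflict.symm)
    (by
      simp only [mem_filter_univ]
      exact fun x x' y z hx _ hy hz hx' hy_ne hz_ne hxy hxz =>
        hxy.cliqueClass_eq hF hS₀ hx hy hz hx' hy_ne hz_ne hxz)
    (by simpa only [mem_filter_univ] using hfour)
  simp only [subset_iff, mem_filter_univ] at hS hhit
  refine ⟨S, fun s hs => hS hs, hpair, fun x hx => ?_⟩
  obtain ⟨s, hs, hsx⟩ := hhit x hx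
  exact ⟨s, hs, hsx ▸ self_mem_cliqueClass F 4 s⟩

end Conflicts

/-! ### Two-colourings of graphs with maximum degree seven and clique number six -/

section TwoColoring

variable {V : Type*} [Fintype V] {G F : SimpleGraph V} {L Q R S S₀ T : Finset V} {a : V}

theorem IsConflictFreeTransversal.inter_nonempty (hF : DegreeCliqueBound F 4)
    (hT : ∀ Q, IsThinClique F 4 Q → (Q ∩ T).Nonempty) (hS₀ : F.IsIndepSet S₀)
    (hinner : ∀ s ∈ S₀, IsInner F s) (hS : IsConflictFreeTransversal G F S₀ S)
    (hQ : F.IsNClique 4 Q) : (Q ∩ (T ∪ S)).Nonempty := by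
  by_cases hthin : ∀ x ∈ Q, ¬ IsFull F 4 x
  · exact (hT Q ⟨hQ, hthin⟩).mono (inter_subset_inter_left subset_union_left)
  push Not at hthin
  obtain ⟨x, hxQ, hx⟩ := hthin
  suffices ∃ y ∈ Q, IsUnhit F S₀ y by
    obtain ⟨y, hyQ, hy⟩ := this
    obtain ⟨s, hs, hsy⟩ := hS.exists_mem y hy
    exact ⟨s, mem_inter.2 ⟨cliqueClass_subset hQ hyQ hsy, mem_union_right _ hs⟩⟩
  by_contra! hunhit
  have hhit : ∀ y ∈ Q, IsFull F 4 y → ∃ s ∈ cliqueClass F 4 y, s ∈ S₀ := fun y hyQ hy =>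
    not_disjoint_iff.1 fun hdisj => hunhit y hyQ ⟨hy, hdisj⟩
  obtain ⟨s, hsx, hs⟩ := hhit x hxQ hx
  obtain ⟨y, hyQ, hyx⟩ : ∃ y ∈ Q, y ∉ cliqueClass F 4 x := exists_mem_notMem_of_card_lt_card (by
    rw [hx.card_cliqueClass_eq_two hF, hQ.card_eq]
    norm_num)
  have hsQ := cliqueClass_subset hQ hxQ hsx
  have hy : IsFull F 4 y :=
    hinner s hs y (subset_closedNbhd_of_isClique hQ.isClique hsQ hyQ)
  obtain ⟨t, hty, ht⟩ := hhit y hyQ hy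
  have hst : s ≠ t := by
    rintro rfl
    refine hyx ?_
    rw [← hx.cliqueClass_eq_of_mem hF hsx, hy.cliqueClass_eq_of_mem hF hty]
    exact self_mem_cliqueClass F 4 y
  exact hS₀ hs ht hst (hQ.isClique hsQ (cliqueClass_subset hQ hyQ hty) hst)

theorem subset_of_isClique_of_subset_union (hF : DegreeCliqueBound F 4) (hT : F.IsIndepSet T)
    (hTthin : ∀ t ∈ T, ∃ Q, IsThinClique F 4 Q ∧ t ∈ Q) (hS : ∀ s ∈ S, IsFull F 4 s)
    (hR : F.IsClique R) (hRTS : R ⊆ T ∪ S) (hcard : 2 ≤ R.card) : R ⊆ S := by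
  intro v hv
  obtain hvT | hvS := mem_union.1 (hRTS hv)
  · obtain ⟨w, hw, hwv⟩ := exists_mem_ne hcard v
    have hadj := hR hv hw hwv.symm
    obtain ⟨Q, hQ, hvQ⟩ := hTthin v hvT
    obtain hwT | hwS := mem_union.1 (hRTS hw)
    · exact absurd hadj (hT hvT hwT hwv.symm)
    · exact absurd hadj (hQ.not_adj_of_isFull hF le_rfl hvQ (hS w hwS))
  · exact hvS

theorem IsConflictFreeTransversal.card_le_two (hF : DegreeCliqueBound F 4)
    (hS₀ : ∀ x, IsInner F x → ∃ s ∈ S₀, s ∈ closedNbhd F x)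
    (hS : IsConflictFreeTransversal G F S₀ S) (hR : F.IsClique R) (hRS : R ⊆ S) :
    R.card ≤ 2 := by
  by_contra! hcard
  obtain ⟨x, y, z, hx, hy, hz, hxy, hxz, hyz⟩ := two_lt_card_iff.1 hcard
  have hne : ∀ {a b : V}, a ∈ R → b ∈ R → a ≠ b → cliqueClass F 4 a ≠ cliqueClass F 4 b :=
    fun ha hb hab => (hS.pairwise (hRS ha) (hRS hb) hab).1
  exact hne hy hz hyz ((hS.isUnhit x (hRS hx)).cliqueClass_eq_of_adj hF hS₀
    (hS.isUnhit y (hRS hy)) (hS.isUnhit z (hRS hz)) (hR hx hy hxy) (hR hx hz hxz)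
    (hne hx hy hxy) (hne hx hz hxz))

theorem lostNbhd_deleteVerts_eq_inter (hG : DegreeCliqueBound G 6)
    (hF : DegreeCliqueBound (deleteVerts G L) 4) (ha : IsFull (deleteVerts G L) 4 a)
    (hQ : G.IsClique Q) (hcard : (Q ∩ L).card = 2) (haQ : a ∈ Q \ L) :
    lostNbhd G (deleteVerts G L) a = Q ∩ L := by
  rw [mem_sdiff] at haQ
  refine (eq_of_subset_of_card_le (fun u hu => ?_)
    (hcard ▸ card_lostNbhd_le hG hF (deleteVerts_le G L) ha)).symm
  rw [mem_inter] at hu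
  exact mem_lostNbhd.2 ⟨hQ haQ.1 hu.1 (ne_of_mem_of_not_mem hu.2 haQ.2).symm,
    fun hadj => hadj.2.2 hu.2⟩

theorem IsConflictFreeTransversal.not_subset_union (hG : DegreeCliqueBound G 6)
    (hL : G.CliqueFreeOn L 3) (hF : DegreeCliqueBound (deleteVerts G L) 4)
    (hT : (deleteVerts G L).IsIndepSet T)
    (hTthin : ∀ t ∈ T, ∃ Q, IsThinClique (deleteVerts G L) 4 Q ∧ t ∈ Q)
    (hS₀ : ∀ x, IsInner (deleteVerts G L) x → ∃ s ∈ S₀, s ∈ closedNbhd (deleteVerts G L) x)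
    (hS : IsConflictFreeTransversal G (deleteVerts G L) S₀ S) (hQ : G.IsNClique 4 Q) :
    ¬ Q ⊆ L ∪ (T ∪ S) := by
  intro hsub
  have hR : (deleteVerts G L).IsClique (Q \ L : Finset V) :=
    isClique_deleteVerts (hQ.isClique.subset (coe_subset.2 sdiff_subset)) sdiff_disjoint
  have hQL : (Q ∩ L).card ≤ 2 :=
    card_le_of_cliqueFreeOn hL (hQ.isClique.subset (coe_subset.2 inter_subset_left))
      inter_subset_right
  have hsum := card_sdiff_add_card_inter Q L
  rw [hQ.card_eq] at hsum
  have hRS : Q \ L ⊆ S := subset_of_isClique_of_subset_union hF hT hTthin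
    (fun s hs => (hS.isUnhit s hs).isFull) hR (sdiff_le_iff.2 hsub) (by omega)
  have hR2 := hS.card_le_two hF hS₀ hR hRS
  obtain ⟨a, ha, b, hb, hab⟩ := one_lt_card.1 (by omega : 1 < (Q \ L).card)
  have hlost : ∀ v ∈ Q \ L, lostNbhd G (deleteVerts G L) v = Q ∩ L := fun v hv =>
    lostNbhd_deleteVerts_eq_inter hG hF (hS.isUnhit v (hRS hv)).isFull hQ.isClique (by omega) hv
  refine (hS.pairwise (hRS ha) (hRS hb) hab).2
    ⟨hR ha hb hab, (hlost a ha).trans (hlost b hb).symm, ?_⟩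
  rw [hlost a ha]
  exact ⟨hQ.isClique.subset (coe_subset.2 inter_subset_left), by omega⟩

theorem exists_bool_isCliqueFreeColoring (hG : DegreeCliqueBound G 6) :
    ∃ c : V → Bool, IsCliqueFreeColoring G 4 c := by
  induction hn : G.support.ncard using Nat.strong_induction_on generalizing G with
  | _ n ih =>
  obtain hV | hV := isEmpty_or_nonempty V
  · exact ⟨isEmptyElim, isCliqueFreeColoring_iff.2 fun Q κ hQ _ => by
      simpa [eq_empty_of_isEmpty Q] using hQ.card_eq⟩
  by_contra hcol
  obtain ⟨L, hL, hF⟩ := exists_cliqueFreeOn_degreeCliqueBound_deleteVerts (r := 2) le_rfl hG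
  obtain ⟨T, hT, hTmeets, hTthin⟩ := exists_isIndepSet_meeting_thinCliques hF le_rfl
  obtain ⟨S₀, hS₀, hinner, hdom⟩ := exists_isIndepSet_dominating_isInner (deleteVerts G L)
  obtain ⟨S, hS⟩ := exists_isConflictFreeTransversal hG hF (deleteVerts_le G L)
    (fun G' hG' hlt => ih _ (hn ▸ hlt) hG' rfl) hcol hdom
  refine hcol ⟨fun v => decide (v ∈ L ∪ (T ∪ S)), isCliqueFreeColoring_iff.2 fun Q κ hQ hκ => ?_⟩
  cases κ with
  | true =>
    exact hS.not_subset_union hG hL hF hT hTthin hdom hQ fun v hv => of_decide_eq_true (hκ v hv)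
  | false =>
    have hmiss : Disjoint Q (L ∪ (T ∪ S)) :=
      disjoint_left.2 fun v hv => of_decide_eq_false (hκ v hv)
    rw [disjoint_union_right] at hmiss
    obtain ⟨v, hv⟩ := hS.inter_nonempty hF hTmeets hS₀ hinner
      ⟨isClique_deleteVerts hQ.isClique hmiss.1, hQ.card_eq⟩
    exact not_disjoint_iff.2 ⟨v, mem_inter.1 hv⟩ hmiss.2

end TwoColoring

/-! ### Splitting off colour classes -/

section ManyColors

variable {V α β : Type*} {G : SimpleGraph V} {S : Finset V} {m q r e e' : ℕ}

theorem IsCliqueFreeColoring.comp_equiv {c : V → α} (hc : IsCliqueFreeColoring G r c)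
    (f : α ≃ β) : IsCliqueFreeColoring G r (f ∘ c) := fun κ _ hκ =>
  hc (f.symm κ) fun _ hv => f.eq_symm_apply.2 (hκ hv)

theorem IsCliqueFreeColoring.snoc {c : V → Fin m} (hc : IsCliqueFreeColoring (deleteVerts G S) r c)
    (hS : G.CliqueFreeOn S r) :
    IsCliqueFreeColoring G r fun v => if v ∈ S then Fin.last m else (c v).castSucc := by
  refine isCliqueFreeColoring_iff.2 fun Q κ hQ hκ => ?_
  cases κ using Fin.lastCases with
  | last =>
    refine hS (fun v hv => by_contra fun hvS => ?_) hQ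
    have := hκ v hv
    rw [if_neg (mt mem_coe.2 hvS)] at this
    exact (Fin.castSucc_lt_last (c v)).ne this
  | cast i =>
    have hQS : ∀ v ∈ Q, v ∉ S := fun v hv hvS => by
      have := hκ v hv
      rw [if_pos hvS] at this
      exact (Fin.castSucc_lt_last i).ne' this
    obtain ⟨v, hv, hne⟩ := hc.exists_ne
      ⟨isClique_deleteVerts hQ.isClique (disjoint_left.2 hQS), hQ.card_eq⟩ i
    have := hκ v hv
    rw [if_neg (hQS v hv)] at this
    exact hne (Fin.castSucc_injective m this)

variable [Fintype V]

theorem DegreeCliqueBound.mono (hG : DegreeCliqueBound G e) (he : e ≤ e') :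
    DegreeCliqueBound G e' :=
  ⟨fun v => (hG.degree_le v).trans (by omega), hG.cliqueFree.mono (by omega)⟩

theorem degreeCliqueBound_of_maxDegree_le [DecidableRel G.Adj] (hdeg : G.maxDegree ≤ e + 1)
    (hclique : G.cliqueNum ≤ e) : DegreeCliqueBound G e where
  degree_le v := by
    have := (G.degree_le_maxDegree v).trans hdeg
    convert! this
  cliqueFree Q hQ := by
    have := hQ.isClique.card_le_cliqueNum
    rw [hQ.card_eq] at this
    omega

theorem exists_fin_isCliqueFreeColoring (hq : 3 ≤ q) (hG : DegreeCliqueBound G (m * q)) :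
    ∃ c : V → Fin m, IsCliqueFreeColoring G (q + 1) c := by
  induction m generalizing G with
  | zero =>
    have hV : IsEmpty V := ⟨fun v => by simpa using hG.card_le (Q := {v}) (by simp)⟩
    exact ⟨isEmptyElim, isCliqueFreeColoring_iff.2 fun Q κ => κ.elim0⟩
  | succ m ih =>
    by_cases hbase : m = 0 ∨ m = 1 ∧ q = 3
    · obtain rfl | ⟨rfl, rfl⟩ := hbase
      · rw [zero_add, one_mul] at hG
        exact ⟨0, isCliqueFreeColoring_iff.2 fun Q κ hQ _ => hG.cliqueFree Q hQ⟩
      · obtain ⟨c, hc⟩ := exists_bool_isCliqueFreeColoring hG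
        exact ⟨_, hc.comp_equiv finTwoEquiv.symm⟩
    · have he : 4 ≤ m * q := by
        obtain hm | hm : m = 1 ∧ 4 ≤ q ∨ 2 ≤ m := by omega
        · rw [hm.1]
          omega
        · calc 4 ≤ 2 * 3 := by norm_num
            _ ≤ m * q := Nat.mul_le_mul hm hq
      rw [Nat.succ_mul] at hG
      obtain ⟨S, hS, hGS⟩ := exists_cliqueFreeOn_degreeCliqueBound_deleteVerts he hG
      obtain ⟨c, hc⟩ := ih hGS
      exact ⟨_, hc.snoc hS⟩

end ManyColors

end CliqueFreeColoring

theorem statement2_general {V : Type*} [Fintype V] (H : SimpleGraph V) [DecidableRel H.Adj]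
    (p : ℕ) (hp : 4 ≤ p) (d : ℕ) (hΔ : H.maxDegree ≤ d + 1) (hω : H.cliqueNum ≤ d) :
    ∃ P : Fin (d ⌈/⌉ (p - 1)) → Set V,
      (∀ x : V, ∃! i, x ∈ P i) ∧
      ∀ i, H.CliqueFreeOn (P i) p := by
  obtain ⟨q, rfl⟩ : ∃ q, p = q + 1 := ⟨p - 1, by omega⟩
  rw [Nat.add_sub_cancel]
  have hd : d ≤ d ⌈/⌉ q * q := by
    rw [mul_comm, ← smul_eq_mul]
    exact le_smul_ceilDiv (by omega)
  obtain ⟨c, hc⟩ := CliqueFreeColoring.exists_fin_isCliqueFreeColoring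
    (q := q) (by omega) ((CliqueFreeColoring.degreeCliqueBound_of_maxDegree_le hΔ hω).mono hd)
  exact ⟨fun i => c ⁻¹' {i}, fun x => ⟨c x, rfl, fun i hi => Eq.symm hi⟩, hc⟩

/-- Let `p ≥ 4` and let `H` be a finite simple graph with `Δ(H) ≥ 6` and
`ω(H) ≤ Δ(H) − 1`. Then `V(H)` can be partitioned into at most `⌈(Δ(H)−1)/(p−1)⌉`
sets each of which induces a `K_p`-free subgraph, i.e.
`χ_{K_p}(H) ≤ ⌈(Δ(H)−1)/(p−1)⌉`. -/
theorem statement2 {V : Type*} [Fintype V] (H : SimpleGraph V) [DecidableRel H.Adj]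
    (p : ℕ) (hp : 4 ≤ p)
    (hΔ : 6 ≤ H.maxDegree) (hω : H.cliqueNum ≤ H.maxDegree - 1) :
    ∃ P : Fin ((H.maxDegree - 1) ⌈/⌉ (p - 1)) → Set V,
      (∀ x : V, ∃! i, x ∈ P i) ∧
      ∀ i, H.CliqueFreeOn (P i) p :=
  statement2_general H p hp (H.maxDegree - 1) (by omega) hω
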